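/- There exist constants d > 1 and R > 1 with the following properties. First, for every real r ≥ 2 with f(r) > d² and every x ∈ c₀₀ with |||x|||_r ≠ ‖x‖_{ℓ∞}, |||x|||_r ≤ (1/(1 − d/√f(r))) · sup{ (1/f(ℓ)) Σ_{i=1}^ℓ |||E_i(x)|||_{r^{f(r)}} : ℓ ∈ ℕ, ℓ ≥ r, E₁ < ⋯ < E_ℓ }. Second, defining for r ≥ R the sequence r₀ = r, r_{k+1} = r_k^{f(r_k)}, the product β(r) = Π_{k=0}^∞ (1/(1 − d/√f(r_k)))·(f(9r_k)/f(r_k)) is finite, and for every sequence (ε_n)_{n≥1} of positive reals with Σ ε_n < ∞, every normalized block sequence (y_n)_{n≥1} of (e_i), and every strictly increasing (k_n)_{n≥0} in ℕ satisfying (1) sup{ Σ_{i=1}^k ‖E_i(y_n)‖ : 1 ≤ k ≤ k_{n−1}, E₁ < ⋯ < E_k } ≤ 1 + ε_n and (2) max supp(y_n) ≤ ε_n f(k_n/3) for all n ≥ 1, the following holds: for every r ≥ R, every m ∈ ℕ and all real scalars (α_i)_{i=1}^m, ||| Σ_{i=1}^m α_i y_i |||_r ≤ β(r) · max_{1 ≤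 i₀ ≤ m} [ |α_{i₀}| + ‖Σ_{i=i₀+1}^m α_i e_i‖ + Σ_{i=1}^m ε_i |α_i| ]. -/

import Mathlib

abbrev c00 : Type := ℕ →₀ ℝ

noncomputable def flog (x : ℝ) : ℝ := Real.logb 2 (x + 1)

noncomputable def supNorm (x : c00) : ℝ := ⨆ i, |x i|

def proj (E : Finset ℕ) (x : c00) : c00 := x.filter (· ∈ E)

def FLt (A B : Finset ℕ) : Prop := ∀ a ∈ A, ∀ b ∈ B, a < b

def IsNormC00 (N : c00 → ℝ) : Prop :=
  (∀ x, N x = 0 ↔ x = 0) ∧ (∀ x y, N (x + y) ≤ N x + N y) ∧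
    ∀ (a : ℝ) (x : c00), N (a • x) = |a| * N x

def schSet (N : c00 → ℝ) (x : c00) : Set ℝ :=
  {s | ∃ n : ℕ, 2 ≤ n ∧ ∃ E : Fin n → Finset ℕ,
    (∀ i j : Fin n, i < j → FLt (E i) (E j)) ∧
    s = (flog n)⁻¹ * ∑ i, N (proj (E i) x)}

def IsSchlumprechtNorm (N : c00 → ℝ) : Prop :=
  IsNormC00 N ∧ ∀ x : c00, IsLUB (insert (supNorm x) (schSet N x)) (N x)

def IsBlockSeq (x : ℕ → c00) : Prop :=
  (∀ n, x n ≠ 0) ∧ ∀ n, ∀ i ∈ (x n).support, ∀ j ∈ (x (n+1)).support, i < j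

def SeqEquiv (N : c00 → ℝ) (u v : ℕ → c00) : Prop :=
  ∃ c : ℝ, 1 ≤ c ∧ ∀ a : ℕ →₀ ℝ,
    (1 / c) * N (a.sum fun i t => t • u i) ≤ N (a.sum fun i t => t • v i) ∧
    N (a.sum fun i t => t • v i) ≤ c * N (a.sum fun i t => t • u i)

/-- `‖x‖_ℓ` : the supremum of `(1/f(ℓ)) ∑ᵢ N(Eᵢ x)` over `E₁ < ⋯ < E_ℓ`. -/
noncomputable def normL (N : c00 → ℝ) (l : ℕ) (x : c00) : ℝ :=
  sSup {s | ∃ E : Fin l → Finset ℕ, (∀ i j : Fin l, i < j → FLt (E i) (E j)) ∧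
    s = (flog l)⁻¹ * ∑ i, N (proj (E i) x)}

/-- `|||x|||_r = max(‖x‖_{ℓ∞}, sup {‖x‖_ℓ : ℓ ∈ ℕ, ℓ ≥ r})`. -/
noncomputable def normR (N : c00 → ℝ) (r : ℝ) (x : c00) : ℝ :=
  max (supNorm x) (sSup {s | ∃ l : ℕ, r ≤ (l : ℝ) ∧ s = normL N l x})

/-- The recursively defined sequence `r₀ = r`, `r_{k+1} = r_k ^ f(r_k)`. -/
noncomputable def rseq (r : ℝ) : ℕ → ℝ
  | 0 => r
  | k + 1 => rseq r k ^ flog (rseq r k)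

/-!
For the character lemma, iterate the implicit equation of the norm on each `E_i(x)`, always with
fewer than `ρ = r ^ f(r)` sets, until the accumulated factor `∏ f(l)` exceeds `√f(r)` or the norm of
a piece is already given by `|||·|||_ρ`. Since `f(ab) ≤ f(a) f(b)`, at most `2 ^ t` pieces of each
`E_i` have factor at most `t`, so that pieces of comparable factor form an admissible family whose
length costs only the additive term `t` in `f`. Pieces of factor above
`√f(r)` therefore contribute `O(1 / √f(r)) |||x|||_r`, which is absorbed into the left-hand side.

For the inductive estimate, the character lemma reduces `|||·|||_r` to averages over
`E_1 < ⋯ < E_l`, `l ≥ r`, of norms `|||·|||_ρ`. At most one block `y_{j₀}` is badly placed with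
respect to the scale `l`: earlier blocks have too short a support to be cut more than `ε_j f(l)`
times, and later ones have `∑ ‖E_i(y_j)‖ ≤ 1 + ε_j`. Each `E_i` fully contains a run of later blocks
except possibly at its two ends; the induction hypothesis turns the run into two unit-vector
combinations, so that at most `4l` consecutive sets arise and the implicit equation for
`∑_{i > j₀} α_i e_i` costs `f(4l) ≤ f(l) + 2`. The total `(f(l) + 3) / f(l)` is at most
`f(9r) / f(r)`.
-/

section Flog

theorem flog_mono {a b : ℝ} (ha : 0 ≤ a) (h : a ≤ b) : flog a ≤ flog b :=
  Real.logb_le_logb_of_le one_lt_two (by linarith) (by linarith)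

@[simp]
theorem flog_zero : flog 0 = 0 := by
  norm_num [flog]

@[simp]
theorem flog_one : flog 1 = 1 := by
  norm_num [flog]

theorem flog_nonneg {a : ℝ} (ha : 0 ≤ a) : 0 ≤ flog a :=
  flog_zero ▸ flog_mono le_rfl ha

theorem one_le_flog {a : ℝ} (ha : 1 ≤ a) : 1 ≤ flog a :=
  flog_one ▸ flog_mono zero_le_one ha

theorem one_lt_flog_two : 1 < flog 2 := by
  rw [flog, Real.lt_logb_iff_rpow_lt one_lt_two (by norm_num)]
  norm_num

theorem two_rpow_flog {a : ℝ} (ha : 0 ≤ a) : (2 : ℝ) ^ flog a = a + 1 :=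
  Real.rpow_logb two_pos (by norm_num) (by linarith)

theorem flog_le_iff {a t : ℝ} (ha : 0 ≤ a) : flog a ≤ t ↔ a + 1 ≤ 2 ^ t :=
  Real.logb_le_iff_le_rpow one_lt_two (by linarith)

/- With `p = f(a) ≥ 1`, convexity of `t ↦ t ^ p` at `2 = (1 - 1/b) * 1 + (1/b) * (b + 1)` gives
`b * 2 ^ p ≤ b - 1 + (b + 1) ^ p`. -/
theorem flog_mul_le {a b : ℝ} (ha : 1 ≤ a) (hb : 1 ≤ b) : flog (a * b) ≤ flog a * flog b := by
  have hb₀ : 0 < b := by linarith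
  have hmid : 1 - 1 / b + 1 / b * (b + 1) = 2 := by field_simp; ring
  have hconv : (2 : ℝ) ^ flog a ≤ 1 - 1 / b + 1 / b * (b + 1) ^ flog a := by
    have h := (convexOn_rpow (one_le_flog ha)).2 (Set.mem_Ici.2 zero_le_one)
      (Set.mem_Ici.2 (by linarith : 0 ≤ b + 1)) (sub_nonneg.2 ((div_le_one hb₀).2 hb))
      (one_div_pos.2 hb₀).le (sub_add_cancel _ _)
    simpa only [smul_eq_mul, mul_one, hmid, Real.one_rpow] using h
  rw [flog_le_iff (by positivity), mul_comm (flog a), Real.rpow_mul zero_le_two,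
    two_rpow_flog hb₀.le]
  rw [two_rpow_flog (by linarith)] at hconv
  field_simp at hconv
  linarith

theorem flog_rpow_le {r t : ℝ} (hr : 0 ≤ r) (ht : 1 ≤ t) : flog (r ^ t) ≤ t * flog r := by
  rw [flog_le_iff (by positivity), mul_comm, Real.rpow_mul zero_le_two, two_rpow_flog hr]
  simpa using Real.add_rpow_le_rpow_add hr zero_le_one ht

theorem flog_mul_two_rpow_le {a t : ℝ} (ha : 0 ≤ a) (ht : 0 ≤ t) :
    flog (a * 2 ^ t) ≤ flog a + t := by
  rw [flog_le_iff (by positivity), Real.rpow_add two_pos, two_rpow_flog ha]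
  linarith [Real.one_le_rpow one_le_two ht]

end Flog

section OrderedFamilies

theorem FLt.mono {A B A' B' : Finset ℕ} (h : FLt A B) (hA : A' ⊆ A) (hB : B' ⊆ B) : FLt A' B' :=
  fun a ha b hb => h a (hA ha) b (hB hb)

/-- Two finite sets of integers are *separated* if one of them lies entirely to the left of the
other. -/
def FSep (A B : Finset ℕ) : Prop := FLt A B ∨ FLt B A

theorem FSep.symm {A B : Finset ℕ} (h : FSep A B) : FSep B A := Or.symm h

theorem FSep.mono {A B A' B' : Finset ℕ} (h : FSep A B) (hA : A' ⊆ A) (hB : B' ⊆ B) :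
    FSep A' B' :=
  h.imp (fun h => h.mono hA hB) (fun h => h.mono hB hA)

theorem FSep.disjoint {A B : Finset ℕ} (h : FSep A B) : Disjoint A B := by
  rw [Finset.disjoint_left]
  intro a hA hB
  rcases h with h | h
  · exact (h a hA a hB).false
  · exact (h a hB a hA).false

theorem FSep.flt_of_sup_le {A B : Finset ℕ} (h : FSep A B) (hsup : A.sup id ≤ B.sup id) :
    FLt A B := by
  rcases h with h | h
  · exact h
  · intro a ha b hb
    obtain ⟨t, ht, hsup_eq⟩ := B.exists_mem_eq_sup ⟨b, hb⟩ id
    have hat : a ≤ t := (Finset.le_sup (f := id) ha).trans (hsup.trans_eq hsup_eq)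
    exact absurd (h t ht a ha) hat.not_gt

/-- The condition `E₁ < ⋯ < E_n`. -/
def IsOrdered {n : ℕ} (E : Fin n → Finset ℕ) : Prop := ∀ i j : Fin n, i < j → FLt (E i) (E j)

namespace IsOrdered

variable {n : ℕ} {E : Fin n → Finset ℕ}

theorem inter (hE : IsOrdered E) (A : Finset ℕ) : IsOrdered fun i => E i ∩ A :=
  fun i j hij => (hE i j hij).mono Finset.inter_subset_left Finset.inter_subset_left

theorem pairwise_fSep (hE : IsOrdered E) : Pairwise fun i j => FSep (E i) (E j) :=
  fun i j hij => hij.lt_or_gt.imp (hE i j) (hE j i)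

theorem snoc (hE : IsOrdered E) {B : Finset ℕ} (hB : ∀ i, FLt (E i) B) :
    IsOrdered (Fin.snoc (α := fun _ => Finset ℕ) E B) := by
  intro i j hij
  induction i using Fin.lastCases with
  | last => exact absurd hij (Fin.le_last j).not_gt
  | cast i =>
    induction j using Fin.lastCases with
    | last => simpa using hB i
    | cast j => simpa using hE i j (by simpa using hij)

theorem sum_sum_inter_le (hE : IsOrdered E) {s : Finset ℕ} {g : ℕ → ℝ} (hg : ∀ a ∈ s, 0 ≤ g a) :
    ∑ i, ∑ a ∈ E i ∩ s, g a ≤ ∑ a ∈ s, g a := by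
  rw [← Finset.sum_biUnion fun i _ j _ hij => (hE.inter s).pairwise_fSep hij |>.disjoint]
  refine Finset.sum_le_sum_of_subset_of_nonneg ?_ fun a ha _ => hg a ha
  exact Finset.biUnion_subset.2 fun i _ => Finset.inter_subset_right

end IsOrdered

theorem exists_isOrdered_sum_eq {ι : Type*} {A : ι → Finset ℕ} {φ : Finset ℕ → ℝ} (hφ : φ ∅ = 0)
    (s : Finset ι) (hA : (s : Set ι).Pairwise fun i j => FSep (A i) (A j)) {n : ℕ}
    (hn : s.card ≤ n) :
    ∃ E : Fin n → Finset ℕ, IsOrdered E ∧ (∀ i, E i ⊆ s.biUnion A) ∧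
      ∑ i, φ (E i) = ∑ i ∈ s, φ (A i) := by
  classical
  induction s using Finset.induction_on_max_value (fun i => (A i).sup id) generalizing n with
  | empty => exact ⟨fun _ => ∅, by simp [IsOrdered, FLt], by simp, by simp [hφ]⟩
  | insert a s ha hmax ih =>
    rw [Finset.card_insert_of_notMem ha] at hn
    obtain ⟨m, rfl⟩ := Nat.exists_eq_add_of_le' (Nat.le_of_add_left_le hn)
    obtain ⟨E, hE, hEA, hsum⟩ := ih (hA.mono (by simp)) (n := m) (by omega)
    have hlast : ∀ x ∈ s, FLt (A x) (A a) := fun x hx =>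
      (hA (by simp [hx]) (by simp) (ne_of_mem_of_not_mem hx ha)).flt_of_sup_le (hmax x hx)
    refine ⟨Fin.snoc (α := fun _ => Finset ℕ) E (A a), hE.snoc fun i p hp => ?_, fun i => ?_, ?_⟩
    · obtain ⟨x, hx, hpx⟩ := Finset.mem_biUnion.1 (hEA i hp)
      exact hlast x hx p hpx
    · rw [Finset.biUnion_insert]
      induction i using Fin.lastCases with
      | last => simp
      | cast i => simpa using (hEA i).trans Finset.subset_union_right
    · simp [Fin.sum_univ_castSucc, Finset.sum_insert ha, hsum, add_comm]

end OrderedFamilies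

section AverageBound

/-- `C` bounds every average `(1/f(n)) ∑ᵢ φ(Eᵢ)` of the set function `φ` over `E₁ < ⋯ < E_n` with
`n ≥ r`. In the applications `φ E` is a norm of `E(x)`. -/
def IsAverageBound (r : ℝ) (φ : Finset ℕ → ℝ) (C : ℝ) : Prop :=
  ∀ n : ℕ, r ≤ n → ∀ E : Fin n → Finset ℕ, IsOrdered E → ∑ i, φ (E i) ≤ flog n * C

namespace IsAverageBound

variable {r C : ℝ} {φ : Finset ℕ → ℝ}

theorem mono (h : IsAverageBound r φ C) {ψ : Finset ℕ → ℝ} {D : ℝ} (hψ : ∀ E, ψ E ≤ φ E)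
    (hD : C ≤ D) : IsAverageBound r ψ D := fun n hn E hE =>
  calc ∑ i, ψ (E i) ≤ ∑ i, φ (E i) := Finset.sum_le_sum fun i _ => hψ (E i)
    _ ≤ flog n * C := h n hn E hE
    _ ≤ flog n * D := mul_le_mul_of_nonneg_left hD (flog_nonneg n.cast_nonneg)

theorem mono_left (h : IsAverageBound r φ C) {s : ℝ} (hrs : r ≤ s) : IsAverageBound s φ C :=
  fun n hn => h n (hrs.trans hn)

theorem add (h : IsAverageBound r φ C) {ψ : Finset ℕ → ℝ} {D : ℝ} (hψ : IsAverageBound r ψ D) :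
    IsAverageBound r (fun E => φ E + ψ E) (C + D) := fun n hn E hE => by
  rw [Finset.sum_add_distrib, mul_add]
  exact add_le_add (h n hn E hE) (hψ n hn E hE)

theorem inter (h : IsAverageBound r φ C) (A : Finset ℕ) :
    IsAverageBound r (fun E => φ (E ∩ A)) C :=
  fun n hn _ hE => h n hn _ (hE.inter A)

theorem sum_le (h : IsAverageBound r φ C) (hφ : φ ∅ = 0) {ι : Type*} {s : Finset ι}
    {A : ι → Finset ℕ} (hA : (s : Set ι).Pairwise fun i j => FSep (A i) (A j)) {n : ℕ}
    (hs : s.card ≤ n) (hn : r ≤ n) : ∑ i ∈ s, φ (A i) ≤ flog n * C := by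
  obtain ⟨E, hE, -, hsum⟩ := exists_isOrdered_sum_eq hφ s hA hs
  exact hsum ▸ h n hn E hE

end IsAverageBound

/-- The supremum of the averages `(1/f(n)) ∑ᵢ φ(Eᵢ)` over `E₁ < ⋯ < E_n` with `n ≥ r`. -/
noncomputable def averageSup (r : ℝ) (φ : Finset ℕ → ℝ) : ℝ :=
  sSup {s | ∃ n : ℕ, r ≤ n ∧ ∃ E : Fin n → Finset ℕ, IsOrdered E ∧
    s = (flog n)⁻¹ * ∑ i, φ (E i)}

theorem IsAverageBound.averageSup_le {r C : ℝ} {φ : Finset ℕ → ℝ} (h : IsAverageBound r φ C)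
    (hC : 0 ≤ C) : averageSup r φ ≤ C := by
  refine Real.sSup_le ?_ hC
  rintro _ ⟨n, hn, E, hE, rfl⟩
  exact inv_mul_le_of_le_mul₀ (flog_nonneg n.cast_nonneg) hC (h n hn E hE)

theorem IsAverageBound.averageSup {r C : ℝ} {φ : Finset ℕ → ℝ} (h : IsAverageBound r φ C)
    (hr : 1 ≤ r) : IsAverageBound r φ (averageSup r φ) := by
  intro n hn E hE
  have hpos : ∀ {m : ℕ}, r ≤ m → 0 < flog m := fun hm =>
    zero_lt_one.trans_le (one_le_flog (hr.trans hm))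
  rw [← inv_mul_le_iff₀ (hpos hn)]
  refine le_csSup ⟨C, ?_⟩ ⟨n, hn, E, hE, rfl⟩
  rintro _ ⟨m, hm, F, hF, rfl⟩
  exact (inv_mul_le_iff₀ (hpos hm)).2 (h m hm F hF)

end AverageBound

section Projections

theorem proj_apply (E : Finset ℕ) (x : c00) (i : ℕ) : proj E x i = if i ∈ E then x i else 0 :=
  Finsupp.filter_apply _ _ _

theorem proj_proj (A B : Finset ℕ) (x : c00) : proj A (proj B x) = proj (A ∩ B) x := by
  ext i
  simp only [proj_apply, Finset.mem_inter, ite_and]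

@[simp]
theorem proj_empty (x : c00) : proj ∅ x = 0 := by
  ext i
  simp [proj_apply]

theorem proj_add (E : Finset ℕ) (x y : c00) : proj E (x + y) = proj E x + proj E y :=
  Finsupp.filter_add

theorem proj_smul (E : Finset ℕ) (a : ℝ) (x : c00) : proj E (a • x) = a • proj E x :=
  Finsupp.filter_smul

theorem proj_sum {ι : Type*} (E : Finset ℕ) (s : Finset ι) (x : ι → c00) :
    proj E (∑ i ∈ s, x i) = ∑ i ∈ s, proj E (x i) :=
  map_sum (Finsupp.filterAddHom (· ∈ E)) x s

theorem proj_inter_support (E : Finset ℕ) (x : c00) : proj (E ∩ x.support) x = proj E x := by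
  ext i
  by_cases h : x i = 0 <;> simp [proj_apply, h]

theorem proj_eq_zero_of_disjoint {E : Finset ℕ} {x : c00} (h : Disjoint E x.support) :
    proj E x = 0 := by
  rw [← proj_inter_support, Finset.disjoint_iff_inter_eq_empty.1 h, proj_empty]

theorem proj_eq_sum (E : Finset ℕ) (x : c00) :
    proj E x = ∑ i ∈ E ∩ x.support, x i • Finsupp.single i (1 : ℝ) := by
  rw [proj, Finsupp.filter_eq_sum, Finset.inter_comm, Finset.filter_mem_eq_inter]
  simp only [Finsupp.smul_single, smul_eq_mul, mul_one]

end Projections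

section SupNorm

theorem le_supNorm (x : c00) (i : ℕ) : |x i| ≤ supNorm x := by
  refine le_ciSup (f := fun i => |x i|) ⟨∑ i ∈ x.support, |x i|, ?_⟩ i
  rintro _ ⟨i, rfl⟩
  by_cases h : i ∈ x.support
  · exact Finset.single_le_sum (f := fun i => |x i|) (fun _ _ => abs_nonneg _) h
  · simpa only [Finsupp.notMem_support_iff.1 h, abs_zero]
      using Finset.sum_nonneg fun i _ => abs_nonneg (x i)

theorem supNorm_le {x : c00} {c : ℝ} (h : ∀ i, |x i| ≤ c) : supNorm x ≤ c := ciSup_le h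

theorem supNorm_nonneg (x : c00) : 0 ≤ supNorm x := (abs_nonneg _).trans (le_supNorm x 0)

theorem supNorm_add_le (x y : c00) : supNorm (x + y) ≤ supNorm x + supNorm y :=
  supNorm_le fun i => (abs_add_le _ _).trans (add_le_add (le_supNorm x i) (le_supNorm y i))

theorem supNorm_proj_le (E : Finset ℕ) (x : c00) : supNorm (proj E x) ≤ supNorm x := by
  refine supNorm_le fun i => ?_
  rw [proj_apply]
  split_ifs
  · exact le_supNorm x i
  · simpa using supNorm_nonneg x

theorem supNorm_single_one (j : ℕ) : supNorm (Finsupp.single j (1 : ℝ)) = 1 := by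
  refine le_antisymm (supNorm_le fun i => ?_) (by simpa using le_supNorm (Finsupp.single j 1) j)
  rw [Finsupp.single_apply]
  split_ifs <;> simp

end SupNorm

namespace IsNormC00

variable {N : c00 → ℝ}

theorem map_zero (hN : IsNormC00 N) : N 0 = 0 := (hN.1 0).2 rfl

theorem add_le (hN : IsNormC00 N) (x y : c00) : N (x + y) ≤ N x + N y := hN.2.1 x y

theorem map_smul (hN : IsNormC00 N) (a : ℝ) (x : c00) : N (a • x) = |a| * N x := hN.2.2 a x

theorem nonneg (hN : IsNormC00 N) (x : c00) : 0 ≤ N x := by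
  have h := hN.add_le x ((-1 : ℝ) • x)
  rw [hN.map_smul, neg_one_smul, add_neg_cancel, hN.map_zero, abs_neg, abs_one] at h
  linarith

theorem sum_le (hN : IsNormC00 N) {ι : Type*} (s : Finset ι) (x : ι → c00) :
    N (∑ i ∈ s, x i) ≤ ∑ i ∈ s, N (x i) :=
  Finset.le_sum_of_subadditive N hN.map_zero.le hN.add_le s x

theorem map_proj_empty (hN : IsNormC00 N) (x : c00) : N (proj ∅ x) = 0 := by
  rw [proj_empty, hN.map_zero]

end IsNormC00

namespace IsSchlumprechtNorm

variable {N : c00 → ℝ}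

theorem isNormC00 (hN : IsSchlumprechtNorm N) : IsNormC00 N := hN.1

theorem supNorm_le (hN : IsSchlumprechtNorm N) (x : c00) : supNorm x ≤ N x :=
  (hN.2 x).1 (Set.mem_insert _ _)

theorem isAverageBound (hN : IsSchlumprechtNorm N) (x : c00) :
    IsAverageBound 2 (fun E => N (proj E x)) (N x) := fun n hn E hE =>
  (inv_mul_le_iff₀ (zero_lt_one.trans_le (one_le_flog (one_le_two.trans hn)))).1 <|
    (hN.2 x).1 (Set.mem_insert_of_mem _ ⟨n, mod_cast hn, E, hE, rfl⟩)

theorem le_of_isAverageBound (hN : IsSchlumprechtNorm N) {x : c00} {c : ℝ} (hsup : supNorm x ≤ c)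
    (h : IsAverageBound 2 (fun E => N (proj E x)) c) : N x ≤ c := by
  refine (hN.2 x).2 ?_
  rintro _ (rfl | ⟨n, hn, E, hE, rfl⟩)
  · exact hsup
  · exact inv_mul_le_of_le_mul₀ (flog_nonneg n.cast_nonneg) ((supNorm_nonneg x).trans hsup)
      (h n (mod_cast hn) E hE)

/- Ordered sets split `e_j` into a single nonzero piece, so the averages are at most
`N(e_j) / f(2) < N(e_j)` and the norm is given by the sup norm. -/
theorem map_single_one (hN : IsSchlumprechtNorm N) (j : ℕ) : N (Finsupp.single j (1 : ℝ)) = 1 := by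
  set e : c00 := Finsupp.single j (1 : ℝ)
  have hflog : 0 < flog 2 := zero_lt_one.trans one_lt_flog_two
  have hproj (E : Finset ℕ) : N (proj E e) = ∑ _a ∈ E ∩ {j}, N e := by
    by_cases h : j ∈ E
    · rw [proj, Finsupp.filter_single_of_pos _ h, Finset.inter_singleton_of_mem h,
        Finset.sum_singleton]
    · rw [proj, Finsupp.filter_single_of_neg _ h, Finset.inter_singleton_of_notMem h,
        Finset.sum_empty, hN.isNormC00.map_zero]
  have haverage : IsAverageBound 2 (fun E => N (proj E e)) (max 1 (N e / flog 2)) := by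
    intro n hn E hE
    calc ∑ i, N (proj (E i) e) = ∑ i, ∑ _a ∈ E i ∩ {j}, N e := by simp only [hproj]
      _ ≤ ∑ _a ∈ ({j} : Finset ℕ), N e := hE.sum_sum_inter_le fun _ _ => hN.isNormC00.nonneg e
      _ = flog 2 * (N e / flog 2) := by rw [Finset.sum_singleton, mul_div_cancel₀ _ hflog.ne']
      _ ≤ flog n * max 1 (N e / flog 2) :=
        mul_le_mul (flog_mono zero_le_two hn) (le_max_right _ _)
          (div_nonneg (hN.isNormC00.nonneg e) hflog.le) (flog_nonneg n.cast_nonneg)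
  refine le_antisymm ?_ (supNorm_single_one j ▸ hN.supNorm_le e)
  have hmax := hN.le_of_isAverageBound ((supNorm_single_one j).trans_le (le_max_left _ _)) haverage
  refine (le_max_iff.1 hmax).resolve_right fun h => ?_
  rw [le_div_iff₀ hflog] at h
  nlinarith [one_lt_flog_two, supNorm_single_one j ▸ hN.supNorm_le e]

theorem map_smul_single_one (hN : IsSchlumprechtNorm N) (a : ℝ) (j : ℕ) :
    N (a • Finsupp.single j (1 : ℝ)) = |a| := by
  rw [hN.isNormC00.map_smul, hN.map_single_one, mul_one]

theorem sum_proj_le_card_support (hN : IsSchlumprechtNorm N) {x : c00} (hx : N x ≤ 1) {n : ℕ}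
    {E : Fin n → Finset ℕ} (hE : IsOrdered E) : ∑ i, N (proj (E i) x) ≤ x.support.card :=
  calc ∑ i, N (proj (E i) x)
      ≤ ∑ i, ∑ a ∈ E i ∩ x.support, |x a| := by
        refine Finset.sum_le_sum fun i _ => ?_
        rw [proj_eq_sum]
        exact (hN.isNormC00.sum_le _ _).trans_eq
          (Finset.sum_congr rfl fun a _ => hN.map_smul_single_one _ a)
    _ ≤ ∑ a ∈ x.support, |x a| := hE.sum_sum_inter_le fun _ _ => abs_nonneg _
    _ ≤ ∑ _a ∈ x.support, 1 :=
        Finset.sum_le_sum fun a _ => (le_supNorm x a).trans ((hN.supNorm_le x).trans hx)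
    _ = x.support.card := by simp

end IsSchlumprechtNorm

section NormR

variable {N : c00 → ℝ} {r : ℝ}

theorem sSup_normL_le {x : c00} {c : ℝ} (hc : 0 ≤ c)
    (h : IsAverageBound r (fun E => N (proj E x)) c) :
    sSup {s | ∃ l : ℕ, r ≤ (l : ℝ) ∧ s = normL N l x} ≤ c := by
  refine Real.sSup_le ?_ hc
  rintro _ ⟨l, hl, rfl⟩
  refine Real.sSup_le ?_ hc
  rintro _ ⟨E, hE, rfl⟩
  exact inv_mul_le_of_le_mul₀ (flog_nonneg l.cast_nonneg) hc (h l hl E hE)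

theorem normR_le_of_isAverageBound {x : c00} {c : ℝ} (hsup : supNorm x ≤ c)
    (h : IsAverageBound r (fun E => N (proj E x)) c) : normR N r x ≤ c :=
  max_le hsup (sSup_normL_le ((supNorm_nonneg x).trans hsup) h)

theorem normR_le_of_ne_supNorm {x : c00} (hx : normR N r x ≠ supNorm x) {c : ℝ} (hc : 0 ≤ c)
    (h : IsAverageBound r (fun E => N (proj E x)) c) : normR N r x ≤ c :=
  ((max_choice _ _).resolve_left hx).trans_le (sSup_normL_le hc h)

theorem supNorm_le_normR (N : c00 → ℝ) (r : ℝ) (x : c00) : supNorm x ≤ normR N r x :=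
  le_max_left _ _

theorem normR_nonneg (N : c00 → ℝ) (r : ℝ) (x : c00) : 0 ≤ normR N r x :=
  (supNorm_nonneg x).trans (supNorm_le_normR N r x)

theorem finite_range_sum_proj (N : c00 → ℝ) (x : c00) (l : ℕ) :
    (Set.range fun E : Fin l → Finset ℕ => ∑ i, N (proj (E i) x)).Finite := by
  refine ((Set.Finite.pi fun _ : Fin l => x.support.powerset.finite_toSet).image
    fun E => ∑ i, N (proj (E i) x)).subset ?_
  rintro _ ⟨E, rfl⟩
  exact ⟨fun i => E i ∩ x.support, fun i _ => by simp, by simp only [proj_inter_support]⟩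

namespace IsSchlumprechtNorm

theorem normR_le (hN : IsSchlumprechtNorm N) (hr : 2 ≤ r) (x : c00) : normR N r x ≤ N x :=
  normR_le_of_isAverageBound (hN.supNorm_le x) ((hN.isAverageBound x).mono_left hr)

theorem normR_isAverageBound (hN : IsSchlumprechtNorm N) (hr : 2 ≤ r) (x : c00) :
    IsAverageBound r (fun E => N (proj E x)) (normR N r x) := by
  have inv_mul_le {l : ℕ} (hl : r ≤ l) {E : Fin l → Finset ℕ} (hE : IsOrdered E) :
      (flog l)⁻¹ * ∑ i, N (proj (E i) x) ≤ N x :=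
    inv_mul_le_of_le_mul₀ (flog_nonneg l.cast_nonneg) (hN.isNormC00.nonneg x)
      (hN.isAverageBound x l (hr.trans hl) E hE)
  intro n hn E hE
  rw [← inv_mul_le_iff₀ (zero_lt_one.trans_le (one_le_flog (by linarith)))]
  calc (flog n)⁻¹ * ∑ i, N (proj (E i) x)
      ≤ normL N n x := by
        refine le_csSup ⟨N x, ?_⟩ ⟨E, hE, rfl⟩
        rintro _ ⟨F, hF, rfl⟩
        exact inv_mul_le hn hF
    _ ≤ normR N r x := by
        refine le_max_of_le_right (le_csSup ⟨N x, ?_⟩ ⟨n, hn, rfl⟩)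
        rintro _ ⟨l, hl, rfl⟩
        refine Real.sSup_le ?_ (hN.isNormC00.nonneg x)
        rintro _ ⟨F, hF, rfl⟩
        exact inv_mul_le hl hF

theorem normR_zero (hN : IsSchlumprechtNorm N) (hr : 2 ≤ r) : normR N r 0 = 0 :=
  le_antisymm ((hN.normR_le hr 0).trans_eq hN.isNormC00.map_zero) (normR_nonneg N r 0)

theorem normR_proj_le (hN : IsSchlumprechtNorm N) (hr : 2 ≤ r) (A : Finset ℕ) (x : c00) :
    normR N r (proj A x) ≤ normR N r x := by
  refine normR_le_of_isAverageBound ((supNorm_proj_le A x).trans (supNorm_le_normR N r x)) ?_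
  simpa only [proj_proj] using (hN.normR_isAverageBound hr x).inter A

theorem normR_add_le (hN : IsSchlumprechtNorm N) (hr : 2 ≤ r) (x y : c00) :
    normR N r (x + y) ≤ normR N r x + normR N r y :=
  normR_le_of_isAverageBound
    ((supNorm_add_le x y).trans (add_le_add (supNorm_le_normR N r x) (supNorm_le_normR N r y)))
    (((hN.normR_isAverageBound hr x).add (hN.normR_isAverageBound hr y)).mono
      (fun E => proj_add E x y ▸ hN.isNormC00.add_le _ _) le_rfl)

theorem normR_sum_le (hN : IsSchlumprechtNorm N) (hr : 2 ≤ r) {ι : Type*} (s : Finset ι)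
    (x : ι → c00) : normR N r (∑ i ∈ s, x i) ≤ ∑ i ∈ s, normR N r (x i) :=
  Finset.le_sum_of_subadditive (normR N r) (hN.normR_zero hr).le (hN.normR_add_le hr) s x

theorem exists_le_sum_of_normR_lt (hN : IsSchlumprechtNorm N) (hr : 2 ≤ r) {x : c00}
    (hx : normR N r x < N x) :
    ∃ l : ℕ, 2 ≤ l ∧ (l : ℝ) < r ∧ ∃ E : Fin l → Finset ℕ, IsOrdered E ∧
      flog l * N x ≤ ∑ i, N (proj (E i) x) := by
  set V : Set ℝ := {s | ∃ l : ℕ, 2 ≤ l ∧ (l : ℝ) < r ∧ ∃ E : Fin l → Finset ℕ, IsOrdered E ∧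
    s = (flog l)⁻¹ * ∑ i, N (proj (E i) x)}
  have hfinite : V.Finite := by
    refine ((Set.finite_Iio ⌈r⌉₊).biUnion fun l _ =>
      (finite_range_sum_proj N x l).image ((flog l)⁻¹ * ·)).subset ?_
    rintro _ ⟨l, -, hlr, E, -, rfl⟩
    exact Set.mem_biUnion (Nat.lt_ceil.2 hlr) ⟨_, ⟨E, rfl⟩, rfl⟩
  obtain ⟨v, hv, hmax⟩ := Set.exists_max_image _ id (hfinite.insert (normR N r x))
    (Set.insert_nonempty _ _)
  have hnormR : normR N r x ≤ v := hmax _ (Set.mem_insert _ _)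
  have hle : N x ≤ v := by
    refine hN.le_of_isAverageBound ((supNorm_le_normR N r x).trans hnormR) fun n hn E hE => ?_
    rcases le_or_gt r n with hrn | hnr
    · exact ((hN.normR_isAverageBound hr x).mono (fun _ => le_rfl) hnormR) n hrn E hE
    · rw [← inv_mul_le_iff₀ (zero_lt_one.trans_le (one_le_flog (one_le_two.trans hn)))]
      exact hmax _ (Set.mem_insert_of_mem _ ⟨n, mod_cast hn, hnr, E, hE, rfl⟩)
  rcases hv with rfl | ⟨l, hl, hlr, E, hE, rfl⟩
  · exact absurd hx hle.not_gt
  · refine ⟨l, hl, hlr, E, hE, (le_inv_mul_iff₀ ?_).1 hle⟩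
    exact zero_lt_one.trans_le (one_le_flog (by exact_mod_cast (one_le_two.trans hl)))

end IsSchlumprechtNorm

end NormR

section NormingForests

/-- A lower bound `v ≤ ∑ⱼ (weight j)⁻¹ N(leaf j (x))` obtained by iterating the implicit equation of
the norm with families of fewer than `ρ` sets, starting from sets contained in `E`. Along a branch
`weight` multiplies the numbers `f(l)` and `mult` the numbers `l` of sets used, so that `c` bounds
the number of starting sets; a branch stops once its weight reaches `G`, or when the norm of the
leaf is already given by `|||·|||_ρ`. -/
structure NormingForest (N : c00 → ℝ) (x : c00) (ρ G : ℝ) (E : Finset ℕ) (c v : ℝ) where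
  ι : Type
  [fintype : Fintype ι]
  leaf : ι → Finset ℕ
  weight : ι → ℝ
  mult : ι → ℝ
  leaf_subset : ∀ j, leaf j ⊆ E
  fSep_leaf : Pairwise fun i j => FSep (leaf i) (leaf j)
  one_le_weight : ∀ j, 1 ≤ weight j
  one_le_mult : ∀ j, 1 ≤ mult j
  flog_mult_le : ∀ j, flog (mult j) ≤ weight j
  weight_lt : ∀ j, weight j < G * flog ρ
  le_normR : ∀ j, weight j < G → N (proj (leaf j) x) ≤ normR N ρ (proj (leaf j) x)
  sum_inv_mult_le : ∑ j, (mult j)⁻¹ ≤ c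
  le_sum : v ≤ ∑ j, (weight j)⁻¹ * N (proj (leaf j) x)

namespace NormingForest

attribute [instance] NormingForest.fintype

variable {N : c00 → ℝ} {x : c00} {ρ G : ℝ}

/-- The forest with the single leaf `E`. -/
def single {E : Finset ℕ} {w p : ℝ} (hw : 1 ≤ w) (hp : 1 ≤ p) (hpw : flog p ≤ w)
    (hwρ : w < G * flog ρ) (hE : w < G → N (proj E x) ≤ normR N ρ (proj E x)) :
    NormingForest N x ρ G E p⁻¹ (w⁻¹ * N (proj E x)) where
  ι := Unit
  leaf _ := E
  weight _ := w
  mult _ := p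
  leaf_subset _ := subset_rfl
  fSep_leaf := Subsingleton.pairwise
  one_le_weight _ := hw
  one_le_mult _ := hp
  flog_mult_le _ := hpw
  weight_lt _ := hwρ
  le_normR _ := hE
  sum_inv_mult_le := by simp
  le_sum := by simp

/-- The union of forests over pairwise separated sets. -/
def union {κ : Type} [Fintype κ] {A : κ → Finset ℕ} {a b : κ → ℝ}
    (T : ∀ i, NormingForest N x ρ G (A i) (a i) (b i)) (hA : Pairwise fun i j => FSep (A i) (A j))
    {E : Finset ℕ} (hAE : ∀ i, A i ⊆ E) {c v : ℝ} (hc : ∑ i, a i ≤ c) (hv : v ≤ ∑ i, b i) :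
    NormingForest N x ρ G E c v where
  ι := Σ i, (T i).ι
  leaf j := (T j.1).leaf j.2
  weight j := (T j.1).weight j.2
  mult j := (T j.1).mult j.2
  leaf_subset j := ((T j.1).leaf_subset j.2).trans (hAE j.1)
  fSep_leaf := by
    rintro ⟨i, j⟩ ⟨i', j'⟩ hne
    by_cases hi : i = i'
    · subst hi
      exact (T i).fSep_leaf fun hj => hne (congrArg (Sigma.mk i) hj)
    · exact (hA hi).mono ((T i).leaf_subset j) ((T i').leaf_subset j')
  one_le_weight j := (T j.1).one_le_weight j.2
  one_le_mult j := (T j.1).one_le_mult j.2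
  flog_mult_le j := (T j.1).flog_mult_le j.2
  weight_lt j := (T j.1).weight_lt j.2
  le_normR j := (T j.1).le_normR j.2
  sum_inv_mult_le := by
    rw [Fintype.sum_sigma]
    exact (Finset.sum_le_sum fun i _ => (T i).sum_inv_mult_le).trans hc
  le_sum := by
    rw [Fintype.sum_sigma]
    exact hv.trans (Finset.sum_le_sum fun i _ => (T i).le_sum)

theorem nonempty_of_le_mul_pow (hN : IsSchlumprechtNorm N) (hρ : 2 ≤ ρ) (x : c00) (n : ℕ)
    {w p : ℝ} (hw : 1 ≤ w) (hp : 1 ≤ p) (hpw : flog p ≤ w) (hwρ : w < G * flog ρ)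
    (hG : G ≤ w * flog 2 ^ n) (E : Finset ℕ) :
    Nonempty (NormingForest N x ρ G E p⁻¹ (w⁻¹ * N (proj E x))) := by
  induction n generalizing w p E with
  | zero => exact ⟨single hw hp hpw hwρ fun hwG => absurd hG (by simpa using hwG)⟩
  | succ n ih =>
    by_cases hterminal : w < G → N (proj E x) ≤ normR N ρ (proj E x)
    · exact ⟨single hw hp hpw hwρ hterminal⟩
    push Not at hterminal
    obtain ⟨hwG, hlt⟩ := hterminal
    obtain ⟨l, hl, hlρ, D, hD, hsplit⟩ := hN.exists_le_sum_of_normR_lt hρ hlt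
    simp only [proj_proj] at hsplit
    have hl₁ : (1 : ℝ) ≤ l := mod_cast one_le_two.trans hl
    have hfl₂ : flog 2 ≤ flog l := flog_mono zero_le_two (mod_cast hl)
    have hfl : 1 ≤ flog l := one_le_flog hl₁
    have hfl₀ : 0 < flog l := zero_lt_one.trans_le hfl
    have hflρ : flog l ≤ flog ρ := flog_mono l.cast_nonneg hlρ.le
    have hGl : G ≤ w * flog l * flog 2 ^ n := hG.trans <| by
      rw [pow_succ', ← mul_assoc]
      have := zero_lt_one.trans one_lt_flog_two
      gcongr
    have hchildren (i : Fin l) := ih (w := w * flog l) (p := p * l)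
      (one_le_mul_of_one_le_of_one_le hw hfl) (one_le_mul_of_one_le_of_one_le hp hl₁)
      ((flog_mul_le hp hl₁).trans (mul_le_mul_of_nonneg_right hpw hfl₀.le))
      (mul_lt_mul hwG hflρ hfl₀ (by linarith))
      hGl (D i ∩ E)
    refine ⟨union (fun i => (hchildren i).some) (hD.inter E).pairwise_fSep
      (fun i => Finset.inter_subset_right) ?_ ?_⟩
    · simp only [Finset.sum_const, Finset.card_univ, Fintype.card_fin, nsmul_eq_mul]
      field_simp
      rfl
    · rw [← Finset.mul_sum, mul_inv, mul_assoc]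
      exact mul_le_mul_of_nonneg_left ((le_inv_mul_iff₀ hfl₀).2 hsplit) (by positivity)

theorem nonempty_of_isOrdered (hN : IsSchlumprechtNorm N) (hρ : 2 ≤ ρ) (hG : 1 < G * flog ρ)
    (x : c00) {l : ℕ} {E : Fin l → Finset ℕ} (hE : IsOrdered E) :
    Nonempty (NormingForest N x ρ G (Finset.univ.biUnion E) l (∑ i, N (proj (E i) x))) := by
  obtain ⟨n, hn⟩ := pow_unbounded_of_one_lt G one_lt_flog_two
  have htree (i : Fin l) := nonempty_of_le_mul_pow hN hρ x n le_rfl le_rfl flog_one.le hG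
    (by rw [one_mul]; exact hn.le) (E i)
  exact ⟨union (fun i => (htree i).some) hE.pairwise_fSep
    (fun i => Finset.subset_biUnion_of_mem E (Finset.mem_univ i)) (by simp) (by simp)⟩

variable {E : Finset ℕ} {c v r C a t : ℝ} {φ : Finset ℕ → ℝ}

theorem card_le_mul_two_rpow (T : NormingForest N x ρ G E c v) {s : Finset T.ι}
    (hs : ∀ j ∈ s, T.weight j ≤ t) : (s.card : ℝ) ≤ c * 2 ^ t := by
  have hcard : (s.card : ℝ) * ((2 : ℝ) ^ t)⁻¹ ≤ c :=
    calc (s.card : ℝ) * ((2 : ℝ) ^ t)⁻¹ = ∑ _j ∈ s, ((2 : ℝ) ^ t)⁻¹ := by simp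
      _ ≤ ∑ j ∈ s, (T.mult j)⁻¹ := by
          refine Finset.sum_le_sum fun j hj => ?_
          have hmult := zero_lt_one.trans_le (T.one_le_mult j)
          have := (flog_le_iff hmult.le).1 ((T.flog_mult_le j).trans (hs j hj))
          exact inv_anti₀ hmult (by linarith)
      _ ≤ ∑ j, (T.mult j)⁻¹ := Finset.sum_le_univ_sum_of_nonneg fun j =>
          inv_nonneg.2 (zero_le_one.trans (T.one_le_mult j))
      _ ≤ c := T.sum_inv_mult_le
  rwa [← div_eq_mul_inv, div_le_iff₀ (by positivity)] at hcard

theorem sum_leaf_le {l : ℕ} (T : NormingForest N x ρ G E l v) (hrl : r ≤ l)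
    (hφ : IsAverageBound r φ C) (hφ₀ : φ ∅ = 0) (hC : 0 ≤ C) (ht : 0 ≤ t) {s : Finset T.ι}
    (hs : ∀ j ∈ s, T.weight j ≤ t) : ∑ j ∈ s, φ (T.leaf j) ≤ (flog l + t) * C := by
  set n := ⌊(l : ℝ) * 2 ^ t⌋₊
  have hl : l ≤ n := Nat.le_floor (le_mul_of_one_le_right l.cast_nonneg
    (Real.one_le_rpow one_le_two ht))
  have hn : flog n ≤ flog l + t :=
    (flog_mono n.cast_nonneg (Nat.floor_le (by positivity))).trans
      (flog_mul_two_rpow_le l.cast_nonneg ht)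
  calc ∑ j ∈ s, φ (T.leaf j) ≤ flog n * C :=
        hφ.sum_le hφ₀ (T.fSep_leaf.set_pairwise _) (Nat.le_floor (T.card_le_mul_two_rpow hs))
          (hrl.trans (mod_cast hl))
    _ ≤ (flog l + t) * C := mul_le_mul_of_nonneg_right hn hC

theorem sum_weight_inv_mul_leaf_le {l : ℕ} (T : NormingForest N x ρ G E l v) (hrl : r ≤ l)
    (hφ : IsAverageBound r φ C) (hφ₀ : φ ∅ = 0) (hφ_nonneg : ∀ A, 0 ≤ φ A) (hC : 0 ≤ C)
    (ha : 0 < a) (ht : 0 ≤ t) {s : Finset T.ι} (has : ∀ j ∈ s, a ≤ T.weight j)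
    (hst : ∀ j ∈ s, T.weight j ≤ t) :
    ∑ j ∈ s, (T.weight j)⁻¹ * φ (T.leaf j) ≤ a⁻¹ * ((flog l + t) * C) :=
  calc ∑ j ∈ s, (T.weight j)⁻¹ * φ (T.leaf j) ≤ ∑ j ∈ s, a⁻¹ * φ (T.leaf j) :=
        Finset.sum_le_sum fun j hj =>
          mul_le_mul_of_nonneg_right (inv_anti₀ ha (has j hj)) (hφ_nonneg _)
    _ = a⁻¹ * ∑ j ∈ s, φ (T.leaf j) := by rw [Finset.mul_sum]
    _ ≤ a⁻¹ * ((flog l + t) * C) :=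
        mul_le_mul_of_nonneg_left (T.sum_leaf_le hrl hφ hφ₀ hC ht hst) (inv_nonneg.2 ha.le)

theorem exists_level (T : NormingForest N x ρ G E c v) (hG : 1 < G) (hρ : flog ρ ≤ G ^ 4) :
    ∃ level : T.ι → ℕ, ∀ j, level j < 5 ∧ G ^ level j ≤ T.weight j ∧
      T.weight j < G ^ (level j + 1) := by
  choose level hlevel using fun j => exists_nat_pow_near (T.one_le_weight j) hG
  refine ⟨level, fun j => ⟨?_, hlevel j⟩⟩
  rw [← pow_lt_pow_iff_right₀ hG]
  calc G ^ level j ≤ T.weight j := (hlevel j).1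
    _ < G * flog ρ := T.weight_lt j
    _ ≤ G ^ 5 := by rw [pow_succ' G 4]; gcongr

theorem sum_light_le {l : ℕ} (T : NormingForest N x ρ G E l v) (hN : IsSchlumprechtNorm N)
    (hρ : 2 ≤ ρ) (hrl : r ≤ l) (hC : IsAverageBound r (fun A => normR N ρ (proj A x)) C)
    (hC₀ : 0 ≤ C) (hG : 1 ≤ G) (hGl : G ≤ flog l / G) {s : Finset T.ι}
    (hs : ∀ j ∈ s, T.weight j < G) :
    ∑ j ∈ s, (T.weight j)⁻¹ * N (proj (T.leaf j) x) ≤ flog l * ((1 + 1 / G) * C) :=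
  calc ∑ j ∈ s, (T.weight j)⁻¹ * N (proj (T.leaf j) x)
      ≤ ∑ j ∈ s, (T.weight j)⁻¹ * normR N ρ (proj (T.leaf j) x) :=
        Finset.sum_le_sum fun j hj => mul_le_mul_of_nonneg_left (T.le_normR j (hs j hj))
          (inv_nonneg.2 (zero_le_one.trans (T.one_le_weight j)))
    _ ≤ 1⁻¹ * ((flog l + G) * C) :=
        T.sum_weight_inv_mul_leaf_le hrl hC (by rw [proj_empty, hN.normR_zero hρ])
          (fun _ => normR_nonneg _ _ _) hC₀ one_pos (by linarith) (fun j _ => T.one_le_weight j)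
          fun j hj => (hs j hj).le
    _ ≤ 1⁻¹ * ((flog l + flog l / G) * C) := by gcongr
    _ = flog l * ((1 + 1 / G) * C) := by ring

theorem sum_heavy_le {l : ℕ} (T : NormingForest N x ρ G E l v) (hN : IsSchlumprechtNorm N)
    (hrl : r ≤ l) (hC : IsAverageBound r (fun A => N (proj A x)) C) (hC₀ : 0 ≤ C) (hG : 1 ≤ G)
    (hGl : G ≤ flog l / G) (k : ℕ) {s : Finset T.ι} (hks : ∀ j ∈ s, G ^ (k + 1) ≤ T.weight j)
    (hsk : ∀ j ∈ s, T.weight j ≤ G ^ (k + 2)) :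
    ∑ j ∈ s, (T.weight j)⁻¹ * N (proj (T.leaf j) x) ≤ flog l * (2 / G * C) := by
  have hG₀ : 0 < G := zero_lt_one.trans_le hG
  calc ∑ j ∈ s, (T.weight j)⁻¹ * N (proj (T.leaf j) x)
      ≤ (G ^ (k + 1))⁻¹ * ((flog l + G ^ (k + 2)) * C) :=
        T.sum_weight_inv_mul_leaf_le hrl hC (hN.isNormC00.map_proj_empty x)
          (fun _ => hN.isNormC00.nonneg _) hC₀ (pow_pos hG₀ _) (pow_nonneg hG₀.le _) hks hsk
    _ = (flog l / G ^ (k + 1) + G) * C := by field_simp; ring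
    _ ≤ (flog l / G + flog l / G) * C := by
        have := flog_nonneg l.cast_nonneg
        gcongr
        exact le_self_pow₀ hG k.succ_ne_zero
    _ = flog l * (2 / G * C) := by ring

end NormingForest

end NormingForests

section Character

variable {N : c00 → ℝ} {r : ℝ} {x : c00}

/-- The supremum on the right-hand side of the character lemma. -/
noncomputable abbrev refinedSup (N : c00 → ℝ) (r : ℝ) (x : c00) : ℝ :=
  averageSup r fun E => normR N (r ^ flog r) (proj E x)

theorem refinedSup_nonneg (N : c00 → ℝ) (r : ℝ) (x : c00) : 0 ≤ refinedSup N r x := by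
  refine Real.sSup_nonneg ?_
  rintro _ ⟨l, -, E, -, rfl⟩
  exact mul_nonneg (inv_nonneg.2 (flog_nonneg l.cast_nonneg))
    (Finset.sum_nonneg fun _ _ => normR_nonneg _ _ _)

theorem le_rpow_flog (hr : 1 ≤ r) : r ≤ r ^ flog r :=
  Real.self_le_rpow_of_one_le hr (one_le_flog hr)

namespace IsSchlumprechtNorm

theorem isAverageBound_refinedSup (hN : IsSchlumprechtNorm N) (hr : 2 ≤ r) (x : c00) :
    IsAverageBound r (fun E => normR N (r ^ flog r) (proj E x)) (refinedSup N r x) := by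
  have hρ : 2 ≤ r ^ flog r := hr.trans (le_rpow_flog (one_le_two.trans hr))
  exact (((hN.isAverageBound x).mono (fun E => hN.normR_le hρ _) le_rfl).mono_left hr).averageSup
    (one_le_two.trans hr)

/- With `G = √f(r)`, leaves of weight less than `G` are normed by `|||·|||_ρ`. At most `2 ^ t * l`
leaves have weight at most `t`, and `f(2 ^ t * l) ≤ f(l) + t`, so for `c ≥ 1` those of weight in
`[G ^ c, G ^ (c + 1))` contribute at most `(f(l) + G ^ (c + 1)) / G ^ c * |||x|||_r`. -/
theorem isAverageBound_refinedSup_add_normR (hN : IsSchlumprechtNorm N) (hr : 2 ≤ r) (x : c00) :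
    IsAverageBound r (fun E => N (proj E x))
      ((1 + 1 / √(flog r)) * refinedSup N r x + 8 / √(flog r) * normR N r x) := by
  intro l hrl E hE
  set G := √(flog r)
  set ρ := r ^ flog r
  have hflog : 1 < flog r := one_lt_flog_two.trans_le (flog_mono zero_le_two hr)
  have hG : 1 < G := Real.lt_sqrt_of_sq_lt (by simpa using hflog)
  have hG₀ : 0 < G := by positivity
  have hρ : 2 ≤ ρ := hr.trans (le_rpow_flog (one_le_two.trans hr))
  have hGl : G ≤ flog l / G := by
    rw [le_div_iff₀ hG₀, Real.mul_self_sqrt (by linarith)]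
    exact flog_mono (by linarith) hrl
  have hρG : flog ρ ≤ G ^ 4 := by
    rw [show G ^ 4 = (G ^ 2) ^ 2 by ring, Real.sq_sqrt (by linarith), sq]
    exact flog_rpow_le (by linarith) hflog.le
  obtain ⟨T⟩ := NormingForest.nonempty_of_isOrdered hN hρ
    (one_lt_mul_of_lt_of_le hG (one_le_flog (by linarith))) x hE
  obtain ⟨level, hlevel⟩ := T.exists_level hG hρG
  set term : T.ι → ℝ := fun j => (T.weight j)⁻¹ * N (proj (T.leaf j) x)
  have hlight : ∑ j with level j = 0, term j ≤ flog l * ((1 + 1 / G) * refinedSup N r x) := by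
    refine T.sum_light_le hN hρ hrl (hN.isAverageBound_refinedSup hr x)
      (refinedSup_nonneg N r x) hG.le hGl fun j hj => ?_
    simpa [(Finset.mem_filter.1 hj).2] using (hlevel j).2.2
  have hheavy (k : ℕ) : ∑ j with level j = k + 1, term j ≤ flog l * (2 / G * normR N r x) := by
    refine T.sum_heavy_le hN hrl (hN.normR_isAverageBound hr x) (normR_nonneg N r x) hG.le hGl k
      (fun j hj => ?_) fun j hj => ?_
    · exact (Finset.mem_filter.1 hj).2 ▸ (hlevel j).2.1
    · simpa [(Finset.mem_filter.1 hj).2] using (hlevel j).2.2.le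
  calc ∑ i, N (proj (E i) x) ≤ ∑ j, term j := T.le_sum
    _ = ∑ c ∈ Finset.range 5, ∑ j with level j = c, term j :=
        (Finset.sum_fiberwise_of_maps_to (fun j _ => Finset.mem_range.2 (hlevel j).1) _).symm
    _ ≤ ∑ c ∈ Finset.range 4, flog l * (2 / G * normR N r x) +
          flog l * ((1 + 1 / G) * refinedSup N r x) := by
        rw [Finset.sum_range_succ']
        exact add_le_add (Finset.sum_le_sum fun k _ => hheavy k) hlight
    _ = flog l * ((1 + 1 / G) * refinedSup N r x + 8 / G * normR N r x) := by
        simp only [Finset.sum_const, Finset.card_range, nsmul_eq_mul]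
        ring

theorem normR_le_refinedSup (hN : IsSchlumprechtNorm N) (hr : 2 ≤ r) (hflog : (9 : ℝ) ^ 2 < flog r)
    (hx : normR N r x ≠ supNorm x) :
    normR N r x ≤ (1 - 9 / √(flog r))⁻¹ * refinedSup N r x := by
  have hG : 9 < √(flog r) := Real.lt_sqrt_of_sq_lt hflog
  have hG₀ : 0 < √(flog r) := by linarith
  have hS := refinedSup_nonneg N r x
  have hM := normR_nonneg N r x
  have hself := normR_le_of_ne_supNorm hx (by positivity)
    (hN.isAverageBound_refinedSup_add_normR hr x)
  have hu : 0 < 1 / √(flog r) := by positivity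
  have hu₉ : 9 * (1 / √(flog r)) < 1 := by rwa [mul_one_div, div_lt_one hG₀]
  rw [← mul_one_div 8] at hself
  rw [← mul_one_div 9, ← div_eq_inv_mul, le_div_iff₀ (by linarith)]
  set u := 1 / √(flog r)
  refine le_of_mul_le_mul_left (a := 1 + u) ?_ (by linarith)
  calc (1 + u) * (normR N r x * (1 - 9 * u)) ≤ normR N r x * (1 - 8 * u) := by
        nlinarith [mul_nonneg hM (sq_nonneg u)]
    _ ≤ (1 + u) * refinedSup N r x := by linarith

end IsSchlumprechtNorm

end Character

section Beta

theorem le_flog_iff {a t : ℝ} (ha : 0 ≤ a) : t ≤ flog a ↔ 2 ^ t ≤ a + 1 :=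
  Real.le_logb_iff_rpow_le one_lt_two (by linarith)

theorem flog_add_three_le {r : ℝ} (hr : 7 ≤ r) : flog r + 3 ≤ flog (9 * r) := by
  rw [le_flog_iff (by linarith), Real.rpow_add two_pos, two_rpow_flog (by linarith)]
  norm_num
  linarith

theorem flog_nine_mul_le {r : ℝ} (hr : 0 ≤ r) : flog (9 * r) ≤ flog r + 4 :=
  (flog_mono (by positivity) (by norm_num; linarith)).trans
    (flog_mul_two_rpow_le hr (t := 4) (by norm_num))

theorem flog_add_three_le_mul {r a : ℝ} (hr : 7 ≤ r) (ha : r ≤ a) :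
    flog a + 3 ≤ flog a * (flog (9 * r) / flog r) := by
  have hpos : 1 ≤ flog r := one_le_flog (by linarith)
  rw [← mul_div_assoc, le_div_iff₀ (by linarith)]
  nlinarith [flog_add_three_le hr, flog_mono (by linarith) ha]

theorem four_mul_flog_le {r : ℝ} (hr : 16 ≤ r) : 4 * flog r ≤ flog (r ^ flog r) := by
  have hflog : 0 ≤ flog r := flog_nonneg (by linarith)
  rw [le_flog_iff (by positivity), Real.rpow_mul zero_le_two]
  refine (Real.rpow_le_rpow (by positivity) ?_ hflog).trans (le_add_of_nonneg_right zero_le_one)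
  norm_num
  exact hr

/-- The constant `R` of the theorem, so large that `9 / √(f r) ≤ 9 / 20` for all `r ≥ R`. -/
noncomputable def betaThreshold : ℝ := 2 ^ 400

theorem lt_of_betaThreshold_le {r : ℝ} (hr : betaThreshold ≤ r) : 16 < r :=
  calc (16 : ℝ) < 2 ^ 5 := by norm_num
    _ ≤ 2 ^ 400 := pow_le_pow_right₀ one_le_two (by norm_num)
    _ ≤ r := hr

theorem flog_of_betaThreshold_le {r : ℝ} (hr : betaThreshold ≤ r) : 400 ≤ flog r := by
  rw [le_flog_iff (by linarith [lt_of_betaThreshold_le hr])]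
  refine le_add_of_le_of_nonneg (hr.trans' ?_) zero_le_one
  exact (Real.rpow_ofNat 2 400).le

theorem betaThreshold_le_rpow_flog {r : ℝ} (hr : betaThreshold ≤ r) :
    betaThreshold ≤ r ^ flog r :=
  hr.trans (le_rpow_flog (by linarith [lt_of_betaThreshold_le hr]))

theorem rseq_succ' (r : ℝ) (k : ℕ) : rseq r (k + 1) = rseq (r ^ flog r) k := by
  induction k with
  | zero => rfl
  | succ k ih => rw [rseq, ih, rseq]

theorem betaThreshold_le_rseq {r : ℝ} (hr : betaThreshold ≤ r) (k : ℕ) :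
    betaThreshold ≤ rseq r k := by
  induction k with
  | zero => exact hr
  | succ k ih => exact betaThreshold_le_rpow_flog ih

theorem four_pow_le_flog_rseq {r : ℝ} (hr : betaThreshold ≤ r) (k : ℕ) :
    4 ^ k ≤ flog (rseq r k) := by
  induction k with
  | zero => exact (by norm_num : (4 : ℝ) ^ 0 ≤ 400).trans (flog_of_betaThreshold_le hr)
  | succ k ih =>
    have h := four_mul_flog_le (lt_of_betaThreshold_le (betaThreshold_le_rseq hr k)).le
    rw [pow_succ', rseq]
    linarith

/-- The factor of `β(r)` contributed by one term `r` of the sequence `(r_k)`. -/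
noncomputable def betaFactor (r : ℝ) : ℝ :=
  (1 - 9 / √(flog r))⁻¹ * (flog (9 * r) / flog r)

theorem one_le_inv_one_sub {u : ℝ} (hu : 0 ≤ u) (hu₁ : u < 1) : 1 ≤ (1 - u)⁻¹ :=
  (one_le_inv₀ (by linarith)).2 (by linarith)

theorem one_le_betaFactor {r : ℝ} (hr : betaThreshold ≤ r) : 1 ≤ betaFactor r := by
  have hr₁₆ := lt_of_betaThreshold_le hr
  have hflog := flog_of_betaThreshold_le hr
  have hsqrt : 20 ≤ √(flog r) := Real.le_sqrt_of_sq_le (by linarith)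
  refine one_le_mul_of_one_le_of_one_le
    (one_le_inv_one_sub (by positivity) ((div_lt_one (by linarith)).2 (by linarith))) ?_
  rw [one_le_div (by linarith)]
  linarith [flog_add_three_le (r := r) (by linarith)]

theorem betaFactor_le {r : ℝ} (hr : betaThreshold ≤ r) :
    betaFactor r ≤ 1 + 20 * (1 / √(flog r)) := by
  have hflog := flog_of_betaThreshold_le hr
  have hsqrt : 20 ≤ √(flog r) := Real.le_sqrt_of_sq_le (by linarith)
  have hsq : √(flog r) * √(flog r) = flog r := Real.mul_self_sqrt (by linarith)
  rw [betaFactor, ← mul_one_div 9]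
  have hu : 0 < 1 / √(flog r) := by positivity
  have hu₂₀ : 1 / √(flog r) ≤ 1 / 20 := one_div_le_one_div_of_le (by norm_num) hsqrt
  have hratio₀ : 0 ≤ flog (9 * r) / flog r :=
    div_nonneg (flog_nonneg (by linarith [lt_of_betaThreshold_le hr])) (by linarith)
  have hratio : flog (9 * r) / flog r ≤ 1 + 4 * (1 / √(flog r) * (1 / √(flog r))) := by
    rw [one_div_mul_one_div, hsq, div_le_iff₀ (by linarith), add_mul, mul_assoc,
      one_div_mul_cancel (by linarith)]
    linarith [flog_nine_mul_le (r := r) (by linarith [lt_of_betaThreshold_le hr])]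
  set u := 1 / √(flog r)
  have hinv : (1 - 9 * u)⁻¹ ≤ 1 + 18 * u := by
    rw [inv_le_iff_one_le_mul₀ (by linarith)]
    nlinarith
  calc (1 - 9 * u)⁻¹ * (flog (9 * r) / flog r) ≤ (1 + 18 * u) * (1 + 4 * (u * u)) := by gcongr
    _ ≤ 1 + 20 * u := by nlinarith [mul_pos hu hu, mul_pos (mul_pos hu hu) hu]

theorem multipliable_betaFactor {r : ℝ} (hr : betaThreshold ≤ r) :
    Multipliable fun k => betaFactor (rseq r k) := by
  suffices h : Summable fun k => betaFactor (rseq r k) - 1 by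
    simpa using Real.multipliable_one_add_of_summable h
  refine Summable.of_nonneg_of_le (f := fun k : ℕ => 20 * (1 / 2 : ℝ) ^ k)
    (fun k => sub_nonneg.2 (one_le_betaFactor (betaThreshold_le_rseq hr k))) (fun k => ?_)
    (summable_geometric_two.mul_left _)
  have hsqrt : (2 : ℝ) ^ k ≤ √(flog (rseq r k)) := by
    refine Real.le_sqrt_of_sq_le ?_
    rw [← pow_mul, mul_comm, pow_mul]
    norm_num
    exact four_pow_le_flog_rseq hr k
  rw [sub_le_iff_le_add', one_div_pow]
  exact (betaFactor_le (betaThreshold_le_rseq hr k)).trans (by gcongr)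

/-- The infinite product `β(r)`. -/
noncomputable def beta (r : ℝ) : ℝ := ∏' k, betaFactor (rseq r k)

theorem beta_eq_mul {r : ℝ} (hr : betaThreshold ≤ r) :
    beta r = betaFactor r * beta (r ^ flog r) := by
  have h := multipliable_betaFactor (betaThreshold_le_rpow_flog hr)
  rw [beta, tprod_eq_zero_mul' (by simpa only [rseq_succ'] using h)]
  simp only [rseq_succ', beta]
  rfl

theorem one_le_beta {r : ℝ} (hr : betaThreshold ≤ r) : 1 ≤ beta r := by
  refine ge_of_tendsto (multipliable_betaFactor hr).hasProd (.of_forall fun s => ?_)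
  exact Finset.prod_induction _ (1 ≤ ·) (fun _ _ => one_le_mul_of_one_le_of_one_le) le_rfl
    fun k _ => one_le_betaFactor (betaThreshold_le_rseq hr k)

end Beta

section InnerHull

/-- The integers lying strictly between two elements of `T`. -/
def innerHull (T : Finset ℕ) : Finset ℕ :=
  T.biUnion fun s => T.biUnion fun t => Finset.Ioo s t

/-- The elements of `T` that do not lie strictly between two others, i.e. its minimum and its
maximum. -/
def endpoints (T : Finset ℕ) : Finset ℕ := T \ innerHull T

theorem mem_innerHull {T : Finset ℕ} {j : ℕ} :
    j ∈ innerHull T ↔ ∃ s ∈ T, ∃ t ∈ T, s < j ∧ j < t := by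
  simp [innerHull]

theorem subset_endpoints_union_innerHull (T : Finset ℕ) : T ⊆ endpoints T ∪ innerHull T :=
  Finset.subset_union_left.trans_eq Finset.sdiff_union_self_eq_union.symm

theorem disjoint_endpoints_innerHull (T : Finset ℕ) : Disjoint (endpoints T) (innerHull T) :=
  Finset.sdiff_disjoint

theorem endpoints_subset (T : Finset ℕ) : endpoints T ⊆ T := Finset.sdiff_subset

theorem card_endpoints_le_two (T : Finset ℕ) : (endpoints T).card ≤ 2 := by
  by_contra! hcard
  obtain ⟨a, b, c, ha, hb, hc, hab, hac, hbc⟩ := Finset.two_lt_card_iff.1 hcard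
  have between {s j t : ℕ} (hs : s ∈ endpoints T) (hj : j ∈ endpoints T) (ht : t ∈ endpoints T)
      (hsj : s < j) (hjt : j < t) : False :=
    (Finset.mem_sdiff.1 hj).2 <| mem_innerHull.2
      ⟨s, endpoints_subset T hs, t, endpoints_subset T ht, hsj, hjt⟩
  grind

theorem innerHull_eq_Icc (T : Finset ℕ) : ∃ p q, innerHull T = Finset.Icc p q := by
  rcases T.eq_empty_or_nonempty with rfl | hT
  · exact ⟨1, 0, rfl⟩
  refine ⟨T.min' hT + 1, T.max' hT - 1, ?_⟩
  ext j
  rw [mem_innerHull, Finset.mem_Icc]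
  refine ⟨fun ⟨s, hs, t, ht, hsj, hjt⟩ => ?_, fun hj => ?_⟩
  · have := T.min'_le s hs
    have := T.le_max' t ht
    omega
  · exact ⟨_, T.min'_mem hT, _, T.max'_mem hT, by omega, by omega⟩

theorem innerHull_subset_Icc {T : Finset ℕ} {c b : ℕ} (hT : T ⊆ Finset.Icc c b) :
    innerHull T ⊆ Finset.Icc c b := by
  intro j hj
  obtain ⟨s, hs, t, ht, hsj, hjt⟩ := mem_innerHull.1 hj
  have hs' := Finset.mem_Icc.1 (hT hs)
  have ht' := Finset.mem_Icc.1 (hT ht)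
  exact Finset.mem_Icc.2 ⟨by omega, by omega⟩

theorem fSep_singleton_innerHull {T : Finset ℕ} {t : ℕ} (ht : t ∈ endpoints T) :
    FSep {t} (innerHull T) := by
  have hinner := (Finset.mem_sdiff.1 ht).2
  by_cases hmin : ∀ s ∈ T, t ≤ s
  · refine .inl fun a ha j hj => ?_
    obtain ⟨s, hs, -, -, hsj, -⟩ := mem_innerHull.1 hj
    exact Finset.mem_singleton.1 ha ▸ (hmin s hs).trans_lt hsj
  · push Not at hmin
    obtain ⟨s, hs, hst⟩ := hmin
    refine .inr fun j hj a ha => ?_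
    obtain ⟨-, -, u, hu, -, hju⟩ := mem_innerHull.1 hj
    refine Finset.mem_singleton.1 ha ▸ hju.trans_le (not_lt.1 fun htu => hinner ?_)
    exact mem_innerHull.2 ⟨s, hs, u, hu, hst, htu⟩

/-- The condition `T₁ ≤ ⋯ ≤ T_n`: consecutive sets may share an endpoint. -/
def IsWeaklyOrdered {n : ℕ} (T : Fin n → Finset ℕ) : Prop :=
  ∀ i j : Fin n, i < j → ∀ s ∈ T i, ∀ t ∈ T j, s ≤ t

namespace IsWeaklyOrdered

variable {n : ℕ} {T : Fin n → Finset ℕ}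

theorem fSep_innerHull (hT : IsWeaklyOrdered T) {i j : Fin n} (hij : i ≠ j) :
    FSep (T i) (innerHull (T j)) := by
  refine hij.lt_or_gt.imp (fun h t ht p hp => ?_) (fun h p hp t ht => ?_)
  · obtain ⟨s, hs, -, -, hsp, -⟩ := mem_innerHull.1 hp
    exact (hT i j h t ht s hs).trans_lt hsp
  · obtain ⟨-, -, s, hs, -, hps⟩ := mem_innerHull.1 hp
    exact hps.trans_le (hT j i h s hs t ht)

theorem innerHull_fSep_innerHull (hT : IsWeaklyOrdered T) {i j : Fin n} (hij : i ≠ j) :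
    FSep (innerHull (T i)) (innerHull (T j)) := by
  have flt {i j : Fin n} (h : i < j) : FLt (innerHull (T i)) (innerHull (T j)) := by
    intro p hp q hq
    obtain ⟨-, -, t, ht, -, hpt⟩ := mem_innerHull.1 hp
    obtain ⟨s, hs, -, -, hsq, -⟩ := mem_innerHull.1 hq
    exact hpt.trans ((hT i j h t ht s hs).trans_lt hsq)
  exact hij.lt_or_gt.imp flt flt

theorem fSep_singleton (hT : IsWeaklyOrdered T) {t : ℕ}
    (ht : t ∈ Finset.univ.biUnion fun i => endpoints (T i)) (j : Fin n) :
    FSep {t} (innerHull (T j)) := by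
  obtain ⟨i, -, hti⟩ := Finset.mem_biUnion.1 ht
  by_cases hij : i = j
  · exact hij ▸ fSep_singleton_innerHull hti
  · exact (hT.fSep_innerHull hij).mono
      (Finset.singleton_subset_iff.2 (endpoints_subset _ hti)) subset_rfl

theorem sum_endpoints_add_sum_innerHull_le (hT : IsWeaklyOrdered T) {c b : ℕ}
    (hTI : ∀ i, T i ⊆ Finset.Icc c b) {g : ℕ → ℝ} (hg : ∀ j ∈ Finset.Icc c b, 0 ≤ g j) :
    ∑ t ∈ Finset.univ.biUnion (fun i => endpoints (T i)), g t +
      ∑ i, ∑ j ∈ innerHull (T i), g j ≤ ∑ j ∈ Finset.Icc c b, g j := by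
  rw [← Finset.sum_biUnion fun i _ j _ hij => (hT.innerHull_fSep_innerHull hij).disjoint,
    ← Finset.sum_union]
  · refine Finset.sum_le_sum_of_subset_of_nonneg (Finset.union_subset ?_ ?_)
      fun j hj _ => hg j hj
    · exact Finset.biUnion_subset.2 fun i _ => (endpoints_subset _).trans (hTI i)
    · exact Finset.biUnion_subset.2 fun i _ => innerHull_subset_Icc (hTI i)
  · refine (Finset.disjoint_biUnion_right _ _ _).2 fun i _ => Finset.disjoint_left.2 fun t ht => ?_
    exact Finset.disjoint_singleton_left.1 (hT.fSep_singleton ht i).disjoint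

/- There are at most `2n` endpoints, and `2n` sets `P i`, `Q i`. -/
theorem sum_endpoints_add_sum_le (hT : IsWeaklyOrdered T) {P Q : Fin n → Finset ℕ}
    (hP : ∀ i, P i ⊆ innerHull (T i)) (hQ : ∀ i, Q i ⊆ innerHull (T i))
    (hPQ : ∀ i, FLt (P i) (Q i)) {r C : ℝ} {φ : Finset ℕ → ℝ} (hφ : φ ∅ = 0)
    (h : IsAverageBound r φ C) (hn : r ≤ (4 * n : ℕ)) :
    ∑ t ∈ Finset.univ.biUnion (fun i => endpoints (T i)), φ {t} + ∑ i, (φ (P i) + φ (Q i)) ≤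
      flog (4 * n : ℕ) * C := by
  set D := Finset.univ.biUnion fun i => endpoints (T i)
  let R (p : Fin n × Bool) : Finset ℕ := if p.2 then P p.1 else Q p.1
  have hR (p) : R p ⊆ innerHull (T p.1) := by
    simp only [R]
    split_ifs
    exacts [hP _, hQ _]
  have hDR {t : ℕ} (ht : t ∈ D) (p) : FSep {t} (R p) :=
    (hT.fSep_singleton ht p.1).mono subset_rfl (hR p)
  have hD : D.card ≤ n * 2 := by
    simpa using Finset.card_biUnion_le_card_mul Finset.univ (fun i => endpoints (T i)) 2
      fun i _ => card_endpoints_le_two (T i)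
  have hcard : (D.disjSum (Finset.univ : Finset (Fin n × Bool))).card ≤ 4 * n := by
    rw [Finset.card_disjSum, Finset.card_univ, Fintype.card_prod, Fintype.card_fin,
      Fintype.card_bool]
    omega
  have hfamily := h.sum_le hφ (A := Sum.elim (fun t => {t}) R) ?_ hcard hn
  · simpa [Finset.sum_disjSum, Fintype.sum_prod_type, R] using hfamily
  rintro (t | ⟨i, u⟩) hp (t' | ⟨i', u'⟩) hq hne
  · have htt' : t ≠ t' := fun h => hne (congrArg Sum.inl h)
    exact htt'.lt_or_gt.imp (by simp [FLt]) (by simp [FLt])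
  · exact hDR (Finset.inl_mem_disjSum.1 hp) (i', u')
  · exact (hDR (Finset.inl_mem_disjSum.1 hq) (i, u)).symm
  · by_cases hi : i = i'
    · subst hi
      cases u <;> cases u'
      exacts [absurd rfl hne, .inr (hPQ i), .inl (hPQ i), absurd rfl hne]
    · exact (hT.innerHull_fSep_innerHull hi).mono (hR (i, u)) (hR (i', u'))

end IsWeaklyOrdered

end InnerHull

section LinearCombinations

/-- The linear combination `∑_{j ∈ s} α_j v_j`. -/
noncomputable def lincomb (α : ℕ → ℝ) (v : ℕ → c00) (s : Finset ℕ) : c00 := ∑ j ∈ s, α j • v j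

/-- The unit vector basis `(e_i)`. -/
noncomputable def unitVec (i : ℕ) : c00 := Finsupp.single i 1

variable {N : c00 → ℝ} {r : ℝ} {α : ℕ → ℝ} {y : ℕ → c00}

theorem proj_lincomb (E : Finset ℕ) (α : ℕ → ℝ) (v : ℕ → c00) (s : Finset ℕ) :
    proj E (lincomb α v s) = ∑ j ∈ s, α j • proj E (v j) := by
  simp only [lincomb, proj_sum, proj_smul]

theorem lincomb_union {s t : Finset ℕ} (hst : Disjoint s t) (α : ℕ → ℝ) (v : ℕ → c00) :
    lincomb α v (s ∪ t) = lincomb α v s + lincomb α v t :=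
  Finset.sum_union hst

theorem lincomb_singleton (α : ℕ → ℝ) (v : ℕ → c00) (j : ℕ) : lincomb α v {j} = α j • v j :=
  Finset.sum_singleton _ _

theorem proj_lincomb_unitVec {s t : Finset ℕ} (hst : s ⊆ t) (α : ℕ → ℝ) :
    proj s (lincomb α unitVec t) = lincomb α unitVec s := by
  ext i
  by_cases hi : i ∈ s <;> simp [lincomb, unitVec, proj_apply, Finsupp.single_apply, hi, @hst i]

theorem IsSchlumprechtNorm.map_lincomb_unitVec_singleton (hN : IsSchlumprechtNorm N) (α : ℕ → ℝ)
    (j : ℕ) : N (lincomb α unitVec {j}) = |α j| := by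
  rw [lincomb_singleton, unitVec, hN.map_smul_single_one]

theorem supNorm_lincomb_le {s : Finset ℕ}
    (hy : ∀ i ∈ s, ∀ j ∈ s, i < j → FLt (y i).support (y j).support)
    (hy₁ : ∀ j ∈ s, supNorm (y j) ≤ 1) {B : ℝ} (hB₀ : 0 ≤ B) (hB : ∀ j ∈ s, |α j| ≤ B) :
    supNorm (lincomb α y s) ≤ B := by
  refine supNorm_le fun i => ?_
  simp only [lincomb, Finsupp.finsetSum_apply, Finsupp.smul_apply, smul_eq_mul]
  by_cases h : ∃ j ∈ s, i ∈ (y j).support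
  · obtain ⟨j, hj, hji⟩ := h
    have hother : ∀ j' ∈ s, j' ≠ j → α j' * y j' i = 0 := fun j' hj' hne => by
      rw [mul_eq_zero, ← Finsupp.notMem_support_iff]
      refine .inr fun hj'i => ?_
      rcases hne.lt_or_gt with h | h
      · exact (hy j' hj' j hj h i hj'i i hji).false
      · exact (hy j hj j' hj' h i hji i hj'i).false
    rw [Finset.sum_eq_single_of_mem j hj hother, abs_mul, ← mul_one B]
    exact mul_le_mul (hB j hj) ((le_supNorm _ i).trans (hy₁ j hj)) (abs_nonneg _) hB₀
  · push Not at h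
    rw [Finset.sum_eq_zero fun j hj => by rw [Finsupp.notMem_support_iff.1 (h j hj), mul_zero]]
    simpa using hB₀

namespace IsSchlumprechtNorm

theorem normR_proj_lincomb_le_sum (hN : IsSchlumprechtNorm N) (hr : 2 ≤ r) (α : ℕ → ℝ)
    (y : ℕ → c00) (E s : Finset ℕ) :
    normR N r (proj E (lincomb α y s)) ≤ ∑ j ∈ s, |α j| * N (proj E (y j)) := by
  rw [proj_lincomb]
  refine (hN.normR_sum_le hr _ _).trans (Finset.sum_le_sum fun j _ => ?_)
  rw [← hN.isNormC00.map_smul]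
  exact hN.normR_le hr _

theorem sum_normR_proj_lincomb_le (hN : IsSchlumprechtNorm N) (hr : 2 ≤ r) (α : ℕ → ℝ)
    (y : ℕ → c00) {l : ℕ} (E : Fin l → Finset ℕ) (s : Finset ℕ) :
    ∑ i, normR N r (proj (E i) (lincomb α y s)) ≤
      ∑ j ∈ s, |α j| * ∑ i, N (proj (E i) (y j)) := by
  simp only [Finset.mul_sum]
  rw [Finset.sum_comm]
  exact Finset.sum_le_sum fun i _ => hN.normR_proj_lincomb_le_sum hr α y (E i) s

end IsSchlumprechtNorm

/-- The indices `j ∈ s` for which `E` meets the support of `y_j`. -/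
def touched (y : ℕ → c00) (s E : Finset ℕ) : Finset ℕ := {j ∈ s | (E ∩ (y j).support).Nonempty}

theorem touched_subset (y : ℕ → c00) (s E : Finset ℕ) : touched y s E ⊆ s :=
  Finset.filter_subset _ _

theorem proj_eq_zero_of_notMem_touched {s E : Finset ℕ} {j : ℕ} (hj : j ∈ s)
    (h : j ∉ touched y s E) : proj E (y j) = 0 := by
  refine proj_eq_zero_of_disjoint (Finset.disjoint_iff_inter_eq_empty.2 ?_)
  exact Finset.not_nonempty_iff_eq_empty.1 fun hne => h (Finset.mem_filter.2 ⟨hj, hne⟩)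

theorem IsOrdered.isWeaklyOrdered_touched {l : ℕ} {E : Fin l → Finset ℕ} (hE : IsOrdered E)
    {s : Finset ℕ} (hy : ∀ i ∈ s, ∀ j ∈ s, i < j → FLt (y i).support (y j).support) :
    IsWeaklyOrdered fun i => touched y s (E i) := by
  intro i i' hii' t ht t' ht'
  obtain ⟨hts, p, hp⟩ := Finset.mem_filter.1 ht
  obtain ⟨ht's, q, hq⟩ := Finset.mem_filter.1 ht'
  rw [Finset.mem_inter] at hp hq
  by_contra! hlt
  exact (hE i i' hii' p hp.1 q hq.1).asymm (hy t' ht's t hts hlt q hq.2 p hp.2)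

theorem IsSchlumprechtNorm.normR_proj_lincomb_le (hN : IsSchlumprechtNorm N) (hr : 2 ≤ r)
    (α : ℕ → ℝ) (y : ℕ → c00) (E : Finset ℕ) (c b : ℕ) :
    normR N r (proj E (lincomb α y (Finset.Icc c b))) ≤
      ∑ j ∈ endpoints (touched y (Finset.Icc c b) E), |α j| * N (proj E (y j)) +
        normR N r (lincomb α y (innerHull (touched y (Finset.Icc c b) E))) := by
  set I := Finset.Icc c b
  set T := touched y I E
  have hTI : T ⊆ I := touched_subset y I E
  have hsub : endpoints T ∪ innerHull T ⊆ I :=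
    Finset.union_subset ((endpoints_subset T).trans hTI) (innerHull_subset_Icc hTI)
  have hproj : proj E (lincomb α y I) =
      proj E (lincomb α y (endpoints T)) + proj E (lincomb α y (innerHull T)) := by
    rw [← proj_add, ← lincomb_union (disjoint_endpoints_innerHull T), proj_lincomb, proj_lincomb]
    refine (Finset.sum_subset hsub fun j hj hjT => ?_).symm
    rw [proj_eq_zero_of_notMem_touched hj fun h => hjT (subset_endpoints_union_innerHull T h),
      smul_zero]
  rw [hproj]
  exact (hN.normR_add_le hr _ _).trans <| add_le_add (hN.normR_proj_lincomb_le_sum hr α y E _)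
    (hN.normR_proj_le hr E _)

end LinearCombinations

section TailEstimate

variable {N : c00 → ℝ} {r β : ℝ} {α ε : ℕ → ℝ} {y : ℕ → c00}

/-- The form in which the inductive hypothesis is applied to the blocks indexed by `s`. There
`P = {i₀}` and `Q = {i ∈ s | i₀ < i}`; arbitrary `P < Q` also cover `s = ∅`. -/
def HasSplitBound (N : c00 → ℝ) (r β : ℝ) (ε α : ℕ → ℝ) (y : ℕ → c00) (s : Finset ℕ) : Prop :=
  ∃ P ⊆ s, ∃ Q ⊆ s, FLt P Q ∧ normR N r (lincomb α y s) ≤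
    β * (N (lincomb α unitVec P) + N (lincomb α unitVec Q) + ∑ j ∈ s, ε j * |α j|)

theorem sum_sum_mul_proj_le_of_subset {l : ℕ} {E D : Fin l → Finset ℕ} {s : Finset ℕ}
    (hN : IsNormC00 N) (hD : ∀ i, D i ⊆ s) (hcut : ∀ j ∈ s, ∑ i, N (proj (E i) (y j)) ≤ 1 + ε j) :
    ∑ i, ∑ j ∈ D i, |α j| * N (proj (E i) (y j)) ≤ ∑ j ∈ s, |α j| + ∑ j ∈ s, ε j * |α j| :=
  calc ∑ i, ∑ j ∈ D i, |α j| * N (proj (E i) (y j))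
      ≤ ∑ i, ∑ j ∈ s, |α j| * N (proj (E i) (y j)) :=
        Finset.sum_le_sum fun i _ => Finset.sum_le_sum_of_subset_of_nonneg (hD i)
          fun j _ _ => mul_nonneg (abs_nonneg _) (hN.nonneg _)
    _ = ∑ j ∈ s, |α j| * ∑ i, N (proj (E i) (y j)) := by
        rw [Finset.sum_comm]
        simp only [Finset.mul_sum]
    _ ≤ ∑ j ∈ s, |α j| * (1 + ε j) := Finset.sum_le_sum fun j hj =>
        mul_le_mul_of_nonneg_left (hcut j hj) (abs_nonneg _)
    _ = ∑ j ∈ s, |α j| + ∑ j ∈ s, ε j * |α j| := by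
        rw [← Finset.sum_add_distrib]
        exact Finset.sum_congr rfl fun j _ => by ring

namespace IsSchlumprechtNorm

theorem sum_abs_endpoints_add_sum_le (hN : IsSchlumprechtNorm N) {l : ℕ} (hl : 1 ≤ l) {c b : ℕ}
    {T P Q : Fin l → Finset ℕ} (hT : IsWeaklyOrdered T) (hTI : ∀ i, T i ⊆ Finset.Icc c b)
    (hP : ∀ i, P i ⊆ innerHull (T i)) (hQ : ∀ i, Q i ⊆ innerHull (T i))
    (hPQ : ∀ i, FLt (P i) (Q i)) :
    ∑ t ∈ Finset.univ.biUnion (fun i => endpoints (T i)), |α t| +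
        ∑ i, (N (lincomb α unitVec (P i)) + N (lincomb α unitVec (Q i))) ≤
      flog (4 * l : ℕ) * N (lincomb α unitVec (Finset.Icc c b)) := by
  set z := lincomb α unitVec (Finset.Icc c b)
  have hunit {A : Finset ℕ} (hA : A ⊆ Finset.Icc c b) : N (proj A z) = N (lincomb α unitVec A) :=
    congrArg N (proj_lincomb_unitVec hA α)
  have hinner (i) := innerHull_subset_Icc (hTI i)
  convert hT.sum_endpoints_add_sum_le hP hQ hPQ (hN.isNormC00.map_proj_empty z)
    (hN.isAverageBound z) (by norm_cast; omega) using 2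
  · refine Finset.sum_congr rfl fun t ht => ?_
    obtain ⟨i, -, hti⟩ := Finset.mem_biUnion.1 ht
    rw [hunit (Finset.singleton_subset_iff.2 (hTI i (endpoints_subset _ hti))),
      hN.map_lincomb_unitVec_singleton]
  · refine Finset.sum_congr rfl fun i _ => ?_
    rw [hunit ((hP i).trans (hinner i)), hunit ((hQ i).trans (hinner i))]

/- Each `E_i` cuts at most two blocks, those at the endpoints of the set of indices it touches. -/
theorem sum_normR_proj_lincomb_le_innerHull (hN : IsSchlumprechtNorm N) (hr : 2 ≤ r) {c b l : ℕ}
    {E : Fin l → Finset ℕ} (hcut : ∀ j ∈ Finset.Icc c b, ∑ i, N (proj (E i) (y j)) ≤ 1 + ε j)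
    {D : Finset ℕ}
    (hD : D = Finset.univ.biUnion fun i => endpoints (touched y (Finset.Icc c b) (E i))) :
    ∑ i, normR N r (proj (E i) (lincomb α y (Finset.Icc c b))) ≤
      ∑ t ∈ D, |α t| + ∑ t ∈ D, ε t * |α t| +
        ∑ i, normR N r (lincomb α y (innerHull (touched y (Finset.Icc c b) (E i)))) := by
  have hDsub : D ⊆ Finset.Icc c b := hD ▸ Finset.biUnion_subset.2 fun i _ =>
    (endpoints_subset _).trans (touched_subset _ _ _)
  have hsubD (i) : endpoints (touched y (Finset.Icc c b) (E i)) ⊆ D :=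
    hD ▸ Finset.subset_biUnion_of_mem (fun i => endpoints (touched y (Finset.Icc c b) (E i)))
      (Finset.mem_univ i)
  refine (Finset.sum_le_sum fun i _ => hN.normR_proj_lincomb_le hr α y (E i) c b).trans ?_
  rw [Finset.sum_add_distrib]
  exact add_le_add_left (sum_sum_mul_proj_le_of_subset hN.isNormC00 hsubD
    fun j hj => hcut j (hDsub hj)) _

theorem sum_normR_proj_lincomb_le_of_hasSplitBound (hN : IsSchlumprechtNorm N) (hr : 2 ≤ r)
    (hβ : 1 ≤ β) {c b : ℕ}
    (hy : ∀ i ∈ Finset.Icc c b, ∀ j ∈ Finset.Icc c b, i < j → FLt (y i).support (y j).support)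
    (hε : ∀ j ∈ Finset.Icc c b, 0 ≤ ε j)
    (hsplit : ∀ p q, Finset.Icc p q ⊆ Finset.Icc c b → HasSplitBound N r β ε α y (Finset.Icc p q))
    {l : ℕ} (hl : 1 ≤ l) {E : Fin l → Finset ℕ} (hE : IsOrdered E)
    (hcut : ∀ j ∈ Finset.Icc c b, ∑ i, N (proj (E i) (y j)) ≤ 1 + ε j) :
    ∑ i, normR N r (proj (E i) (lincomb α y (Finset.Icc c b))) ≤
      β * (flog (4 * l : ℕ) * N (lincomb α unitVec (Finset.Icc c b)) +
        ∑ j ∈ Finset.Icc c b, ε j * |α j|) := by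
  set T := fun i => touched y (Finset.Icc c b) (E i)
  have hTI (i) : T i ⊆ Finset.Icc c b := touched_subset y _ (E i)
  have hT : IsWeaklyOrdered T := hE.isWeaklyOrdered_touched hy
  have hinner (i) : HasSplitBound N r β ε α y (innerHull (T i)) := by
    obtain ⟨p, q, hpq⟩ := innerHull_eq_Icc (T i)
    exact hpq ▸ hsplit p q (hpq ▸ innerHull_subset_Icc (hTI i))
  choose P hP Q hQ hPQ hbound using hinner
  have hεα : ∀ j ∈ Finset.Icc c b, 0 ≤ ε j * |α j| := fun j hj =>
    mul_nonneg (hε j hj) (abs_nonneg _)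
  have hfamily := hN.sum_abs_endpoints_add_sum_le (α := α) hl hT hTI hP hQ hPQ
  have hepssum := hT.sum_endpoints_add_sum_innerHull_le hTI hεα
  set D := Finset.univ.biUnion fun i => endpoints (T i) with hD
  have hcuts := hN.sum_normR_proj_lincomb_le_innerHull (α := α) hr hcut hD
  have hD₀ : 0 ≤ ∑ t ∈ D, |α t| + ∑ t ∈ D, ε t * |α t| := by
    refine add_nonneg (Finset.sum_nonneg fun _ _ => abs_nonneg _) (Finset.sum_nonneg fun t ht => ?_)
    obtain ⟨i, -, hti⟩ := Finset.mem_biUnion.1 ht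
    exact hεα t (hTI i (endpoints_subset _ hti))
  calc ∑ i, normR N r (proj (E i) (lincomb α y (Finset.Icc c b)))
      ≤ ∑ t ∈ D, |α t| + ∑ t ∈ D, ε t * |α t| +
          ∑ i, β * (N (lincomb α unitVec (P i)) + N (lincomb α unitVec (Q i)) +
            ∑ j ∈ innerHull (T i), ε j * |α j|) :=
        hcuts.trans (add_le_add_right (Finset.sum_le_sum fun i _ => hbound i) _)
    _ ≤ β * (∑ t ∈ D, |α t| + ∑ t ∈ D, ε t * |α t|) +
          β * (∑ i, (N (lincomb α unitVec (P i)) + N (lincomb α unitVec (Q i))) +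
            ∑ i, ∑ j ∈ innerHull (T i), ε j * |α j|) := by
        rw [← Finset.mul_sum, Finset.sum_add_distrib]
        exact add_le_add_left (le_mul_of_one_le_left hD₀ hβ) _
    _ ≤ _ := by
        rw [← mul_add]
        exact mul_le_mul_of_nonneg_left (by linarith) (by linarith)

end IsSchlumprechtNorm

end TailEstimate

section RapidBlockSeq

/-- The hypotheses on the block sequence `(y_n)`, the errors `(ε_n)` and the integers `(k_n)`. The
sequences `y` and `ε` are indexed from `1`; `y 0` and `ε 0` are arbitrary. -/
structure IsRapidBlockSeq (N : c00 → ℝ) (ε : ℕ → ℝ) (y : ℕ → c00) (k : ℕ → ℕ) : Prop where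
  eps_nonneg : ∀ n, 1 ≤ n → 0 ≤ ε n
  norm_eq_one : ∀ n, 1 ≤ n → N (y n) = 1
  support_flt_succ : ∀ n, 1 ≤ n → FLt (y n).support (y (n + 1)).support
  monotone : Monotone k
  sum_proj_le : ∀ n, 1 ≤ n → ∀ m : ℕ, 1 ≤ m → m ≤ k (n - 1) →
    ∀ E : Fin m → Finset ℕ, IsOrdered E → ∑ i, N (proj (E i) (y n)) ≤ 1 + ε n
  le_of_mem_support : ∀ n, 1 ≤ n → ∀ i ∈ (y n).support, (i : ℝ) ≤ ε n * flog ((k n : ℝ) / 3)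

/-- The quantity whose maximum over `i₀` bounds the norm of `∑_{i=a}^b α_i y_i`. -/
noncomputable def tailBound (N : c00 → ℝ) (ε α : ℕ → ℝ) (a b i₀ : ℕ) : ℝ :=
  |α i₀| + N (lincomb α unitVec (Finset.Icc (i₀ + 1) b)) + ∑ i ∈ Finset.Icc a b, ε i * |α i|

namespace IsRapidBlockSeq

variable {N : c00 → ℝ} {ε α : ℕ → ℝ} {y : ℕ → c00} {k : ℕ → ℕ} {r β B : ℝ} {a b j l : ℕ}

theorem support_flt (h : IsRapidBlockSeq N ε y k) (hN : IsNormC00 N) {i : ℕ} (hi : 1 ≤ i)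
    (hij : i < j) : FLt (y i).support (y j).support := by
  induction j, hij using Nat.le_induction with
  | base => exact h.support_flt_succ i hi
  | succ n hn ih =>
    have hn₁ : 1 ≤ n := hi.trans (Nat.le_of_succ_le hn)
    have hne : y n ≠ 0 := fun h₀ => by simpa [h₀, hN.map_zero] using h.norm_eq_one n hn₁
    obtain ⟨c, hc⟩ := Finsupp.support_nonempty_iff.2 hne
    exact fun p hp q hq => (ih p hp c hc).trans (h.support_flt_succ n hn₁ c hc q hq)

theorem card_support_erase_zero_le (h : IsRapidBlockSeq N ε y k) (hj : 1 ≤ j) (hk : k j ≤ l) :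
    ((y j).support.erase 0).card ≤ ε j * flog l := by
  have hk₃ : (k j : ℝ) / 3 ≤ l := by
    have : (k j : ℝ) ≤ l := mod_cast hk
    linarith [(k j).cast_nonneg (α := ℝ)]
  have hC₀ : 0 ≤ ε j * flog l := mul_nonneg (h.eps_nonneg j hj) (flog_nonneg l.cast_nonneg)
  have hsub : (y j).support.erase 0 ⊆ Finset.Icc 1 ⌊ε j * flog l⌋₊ := by
    intro i hi
    obtain ⟨hi₀, hi⟩ := Finset.mem_erase.1 hi
    refine Finset.mem_Icc.2 ⟨Nat.one_le_iff_ne_zero.2 hi₀, Nat.le_floor ?_⟩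
    exact (h.le_of_mem_support j hj i hi).trans
      (mul_le_mul_of_nonneg_left (flog_mono (by positivity) hk₃) (h.eps_nonneg j hj))
  refine (Nat.cast_le.2 (Finset.card_le_card hsub)).trans ?_
  simpa using Nat.floor_le hC₀

/- Only `y_1` can have `0` in its support. -/
theorem sum_proj_le_of_le (h : IsRapidBlockSeq N ε y k) (hN : IsSchlumprechtNorm N) (hj : 1 ≤ j)
    (hk : k j ≤ l) {E : Fin l → Finset ℕ} (hE : IsOrdered E) :
    ∑ i, N (proj (E i) (y j)) ≤ ε j * flog l + if j = 1 then 1 else 0 := by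
  refine (hN.sum_proj_le_card_support (h.norm_eq_one j hj).le hE).trans ?_
  split_ifs with hj₁
  · refine le_trans ?_ (add_le_add_left (h.card_support_erase_zero_le hj hk) 1)
    exact_mod_cast Nat.sub_le_iff_le_add.1 Finset.pred_card_le_card_erase
  · have h₀ : 0 ∉ (y j).support := fun h₀ => by
      have hne : y 1 ≠ 0 := fun h₁ => by
        simpa [h₁, hN.isNormC00.map_zero] using h.norm_eq_one 1 le_rfl
      obtain ⟨c, hc⟩ := Finsupp.support_nonempty_iff.2 hne
      exact Nat.not_lt_zero c (h.support_flt hN.isNormC00 le_rfl (by omega) c hc 0 h₀)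
    simpa [Finset.erase_eq_of_notMem h₀] using h.card_support_erase_zero_le hj hk

theorem head_le (h : IsRapidBlockSeq N ε y k) (hN : IsSchlumprechtNorm N) (hr : 2 ≤ r)
    {s : Finset ℕ} (hs : ∀ j ∈ s, 1 ≤ j) (hk : ∀ j ∈ s, k j ≤ l) (hB₀ : 0 ≤ B)
    (hB : ∀ j ∈ s, |α j| ≤ B) {E : Fin l → Finset ℕ} (hE : IsOrdered E) :
    ∑ i, normR N r (proj (E i) (lincomb α y s)) ≤ flog l * ∑ j ∈ s, ε j * |α j| + B :=
  calc ∑ i, normR N r (proj (E i) (lincomb α y s))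
      ≤ ∑ j ∈ s, |α j| * ∑ i, N (proj (E i) (y j)) := hN.sum_normR_proj_lincomb_le hr α y E s
    _ ≤ ∑ j ∈ s, |α j| * (ε j * flog l + if j = 1 then 1 else 0) :=
        Finset.sum_le_sum fun j hj => mul_le_mul_of_nonneg_left
          (h.sum_proj_le_of_le hN (hs j hj) (hk j hj) hE) (abs_nonneg _)
    _ = flog l * ∑ j ∈ s, ε j * |α j| + if 1 ∈ s then |α 1| else 0 := by
        simp only [mul_add, Finset.sum_add_distrib, Finset.mul_sum, mul_ite, mul_one, mul_zero,
          Finset.sum_ite_eq']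
        exact congrArg (· + _) (Finset.sum_congr rfl fun j _ => by ring)
    _ ≤ flog l * ∑ j ∈ s, ε j * |α j| + B := by
        gcongr
        split_ifs with h₁
        exacts [hB 1 h₁, hB₀]

theorem single_le (h : IsRapidBlockSeq N ε y k) (hN : IsSchlumprechtNorm N) (hr : 2 ≤ r)
    (hj : 1 ≤ j) (hl : 2 ≤ l) {E : Fin l → Finset ℕ} (hE : IsOrdered E) :
    ∑ i, normR N r (proj (E i) (lincomb α y {j})) ≤ flog l * |α j| := by
  refine (hN.sum_normR_proj_lincomb_le hr α y E {j}).trans ?_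
  have havg := hN.isAverageBound (y j) l (mod_cast hl) E hE
  rw [h.norm_eq_one j hj, mul_one] at havg
  rw [Finset.sum_singleton, mul_comm]
  exact mul_le_mul_of_nonneg_right havg (abs_nonneg _)

theorem tail_le (h : IsRapidBlockSeq N ε y k) (hN : IsSchlumprechtNorm N) (hr : 2 ≤ r)
    (hβ : 1 ≤ β) (ha : 1 ≤ a) (hl : 1 ≤ l) (hk : ∀ j ∈ Finset.Icc a b, l ≤ k (j - 1))
    (hsplit : ∀ p q, Finset.Icc p q ⊆ Finset.Icc a b → HasSplitBound N r β ε α y (Finset.Icc p q))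
    {E : Fin l → Finset ℕ} (hE : IsOrdered E) :
    ∑ i, normR N r (proj (E i) (lincomb α y (Finset.Icc a b))) ≤
      β * ((flog l + 2) * N (lincomb α unitVec (Finset.Icc a b)) +
        flog l * ∑ j ∈ Finset.Icc a b, ε j * |α j|) := by
  have one_le {j : ℕ} (hj : j ∈ Finset.Icc a b) : 1 ≤ j := ha.trans (Finset.mem_Icc.1 hj).1
  have hε : ∀ j ∈ Finset.Icc a b, 0 ≤ ε j := fun j hj => h.eps_nonneg j (one_le hj)
  have hfour : flog (4 * l : ℕ) ≤ flog l + 2 := by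
    have := flog_mul_two_rpow_le (l.cast_nonneg (α := ℝ)) zero_le_two
    norm_num at this
    rwa [Nat.cast_mul, mul_comm, Nat.cast_ofNat]
  refine (hN.sum_normR_proj_lincomb_le_of_hasSplitBound hr hβ
    (fun i hi j _ hij => h.support_flt hN.isNormC00 (one_le hi) hij) hε hsplit hl hE
    fun j hj => h.sum_proj_le j (one_le hj) l hl (hk j hj) E hE).trans ?_
  refine mul_le_mul_of_nonneg_left (add_le_add ?_ ?_) (by linarith)
  · exact mul_le_mul_of_nonneg_right hfour (hN.isNormC00.nonneg _)
  · exact le_mul_of_one_le_left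
      (Finset.sum_nonneg fun j hj => mul_nonneg (hε j hj) (abs_nonneg _))
      (one_le_flog (mod_cast hl))

end IsRapidBlockSeq

end RapidBlockSeq

section MainEstimate

theorem exists_mem_Icc_le_le {k : ℕ → ℕ} (hk : Monotone k) {a b : ℕ} (hab : a ≤ b) (l : ℕ) :
    ∃ j₀ ∈ Finset.Icc a b, (∀ j ∈ Finset.Ico a j₀, k j ≤ l) ∧
      ∀ j ∈ Finset.Icc (j₀ + 1) b, l ≤ k (j - 1) := by
  induction b, hab using Nat.le_induction with
  | base => exact ⟨a, by simp, by simp, by simp⟩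
  | succ b hab ih =>
    rcases le_total l (k b) with hl | hl
    · obtain ⟨j₀, hj₀, hhead, htail⟩ := ih
      refine ⟨j₀, Finset.Icc_subset_Icc_right b.le_succ hj₀, hhead, fun j hj => ?_⟩
      obtain ⟨hj, hjb⟩ := Finset.mem_Icc.1 hj
      rcases hjb.lt_or_eq with hjb | rfl
      · exact htail j (Finset.mem_Icc.2 ⟨hj, Nat.lt_succ_iff.1 hjb⟩)
      · exact hl
    · refine ⟨b + 1, by simp; omega, fun j hj => (hk ?_).trans hl, by simp⟩
      exact Nat.lt_succ_iff.1 (Finset.mem_Ico.1 hj).2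

theorem sum_Icc_eq_add {M : Type*} [AddCommMonoid M] {a b j₀ : ℕ}
    (hj₀ : j₀ ∈ Finset.Icc a b) (g : ℕ → M) :
    ∑ j ∈ Finset.Icc a b, g j =
      ∑ j ∈ Finset.Ico a j₀, g j + g j₀ + ∑ j ∈ Finset.Icc (j₀ + 1) b, g j := by
  obtain ⟨ha, hb⟩ := Finset.mem_Icc.1 hj₀
  simp only [← Finset.Ico_add_one_right_eq_Icc]
  rw [← Finset.sum_Ico_succ_top ha, Finset.sum_Ico_consecutive g (by omega) (by omega)]

variable {N : c00 → ℝ} {ε α : ℕ → ℝ} {y : ℕ → c00} {k : ℕ → ℕ} {r β B : ℝ} {a b j₀ l : ℕ}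

theorem IsSchlumprechtNorm.sum_normR_proj_lincomb_Icc_le (hN : IsSchlumprechtNorm N) (hr : 2 ≤ r)
    (hj₀ : j₀ ∈ Finset.Icc a b) (E : Fin l → Finset ℕ) :
    ∑ i, normR N r (proj (E i) (lincomb α y (Finset.Icc a b))) ≤
      ∑ i, normR N r (proj (E i) (lincomb α y (Finset.Ico a j₀))) +
        ∑ i, normR N r (proj (E i) (lincomb α y {j₀})) +
        ∑ i, normR N r (proj (E i) (lincomb α y (Finset.Icc (j₀ + 1) b))) := by
  rw [← Finset.sum_add_distrib, ← Finset.sum_add_distrib]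
  refine Finset.sum_le_sum fun i _ => ?_
  have hsum : lincomb α y (Finset.Icc a b) = lincomb α y (Finset.Ico a j₀) + lincomb α y {j₀} +
      lincomb α y (Finset.Icc (j₀ + 1) b) := by
    rw [lincomb_singleton]
    exact sum_Icc_eq_add hj₀ _
  rw [hsum, proj_add, proj_add]
  exact (hN.normR_add_le hr _ _).trans (add_le_add_left (hN.normR_add_le hr _ _) _)

theorem hasSplitBound_Icc (hN : IsSchlumprechtNorm N) (hr : 2 ≤ r) {p q : ℕ}
    (hbound : p ≤ q → ∀ B, (∀ i₀ ∈ Finset.Icc p q, tailBound N ε α p q i₀ ≤ B) →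
      normR N r (lincomb α y (Finset.Icc p q)) ≤ β * B) :
    HasSplitBound N r β ε α y (Finset.Icc p q) := by
  rcases lt_or_ge q p with hqp | hpq
  · rw [Finset.Icc_eq_empty_of_lt hqp]
    refine ⟨∅, subset_rfl, ∅, subset_rfl, fun _ h => absurd h (Finset.notMem_empty _), ?_⟩
    simp [lincomb, hN.normR_zero hr, hN.isNormC00.map_zero]
  · obtain ⟨i₀, hi₀, hmax⟩ := Finset.exists_max_image (Finset.Icc p q) (tailBound N ε α p q)
      (Finset.nonempty_Icc.2 hpq)
    refine ⟨{i₀}, Finset.singleton_subset_iff.2 hi₀, Finset.Icc (i₀ + 1) q,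
      Finset.Icc_subset_Icc_left ((Finset.mem_Icc.1 hi₀).1.trans i₀.le_succ), fun t ht u hu => ?_,
      ?_⟩
    · rw [Finset.mem_singleton.1 ht]
      exact (Finset.mem_Icc.1 hu).1
    · rw [hN.map_lincomb_unitVec_singleton]
      exact hbound hpq _ hmax

namespace IsRapidBlockSeq

theorem sum_eps_nonneg (h : IsRapidBlockSeq N ε y k) {s : Finset ℕ} (hs : ∀ j ∈ s, 1 ≤ j) :
    0 ≤ ∑ j ∈ s, ε j * |α j| :=
  Finset.sum_nonneg fun j hj => mul_nonneg (h.eps_nonneg j (hs j hj)) (abs_nonneg _)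

theorem abs_le_tailBound (h : IsRapidBlockSeq N ε y k) (hN : IsNormC00 N) (ha : 1 ≤ a) (i₀ : ℕ) :
    |α i₀| ≤ tailBound N ε α a b i₀ :=
  (le_add_of_nonneg_right (hN.nonneg _)).trans
    (le_add_of_nonneg_right (h.sum_eps_nonneg fun _ hj => ha.trans (Finset.mem_Icc.1 hj).1))

/- Up to `j₀` the supports are so short that `E_1, …, E_l` cut them into few pieces, beyond `j₀`
the vectors are nearly indivisible at scale `l`. -/
theorem sum_normR_proj_lincomb_le (h : IsRapidBlockSeq N ε y k) (hN : IsSchlumprechtNorm N)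
    (hr : 2 ≤ r) (hβ : 1 ≤ β) (ha : 1 ≤ a) (hab : a ≤ b)
    (hB : ∀ i₀ ∈ Finset.Icc a b, tailBound N ε α a b i₀ ≤ B)
    (hsplit : ∀ p q, Finset.Icc p q ⊆ Finset.Icc (a + 1) b →
      HasSplitBound N r β ε α y (Finset.Icc p q))
    (hl : 2 ≤ l) {E : Fin l → Finset ℕ} (hE : IsOrdered E) :
    ∑ i, normR N r (proj (E i) (lincomb α y (Finset.Icc a b))) ≤ (flog l + 3) * (β * B) := by
  obtain ⟨j₀, hj₀, hkhead, hktail⟩ := exists_mem_Icc_le_le h.monotone hab l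
  obtain ⟨haj₀, hj₀b⟩ := Finset.mem_Icc.1 hj₀
  have hα : ∀ j ∈ Finset.Icc a b, |α j| ≤ B := fun j hj =>
    (h.abs_le_tailBound hN.isNormC00 ha j).trans (hB j hj)
  have hB₀ : 0 ≤ B := (abs_nonneg _).trans (hα j₀ hj₀)
  have hIco : ∀ j ∈ Finset.Ico a j₀, 1 ≤ j := fun j hj => ha.trans (Finset.mem_Ico.1 hj).1
  have hhead := h.head_le hN hr hIco hkhead hB₀
    (fun j hj => hα j (Finset.Ico_subset_Icc_self.trans (Finset.Icc_subset_Icc_right hj₀b) hj)) hE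
  have hmid := h.single_le (α := α) hN hr (ha.trans haj₀) hl hE
  have htail := h.tail_le hN hr hβ (by omega) (by omega) hktail
    (fun p q hpq => hsplit p q (hpq.trans (Finset.Icc_subset_Icc_left (by omega)))) hE
  have hhead₀ := h.sum_eps_nonneg (α := α) hIco
  have htail₀ : 0 ≤ ∑ j ∈ Finset.Icc (j₀ + 1) b, ε j * |α j| :=
    h.sum_eps_nonneg fun j hj => by have := (Finset.mem_Icc.1 hj).1; omega
  have hmid₀ := mul_nonneg (h.eps_nonneg j₀ (ha.trans haj₀)) (abs_nonneg (α j₀))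
  have hBj₀ := hB j₀ hj₀
  rw [tailBound, sum_Icc_eq_add hj₀] at hBj₀
  have hα₀ := abs_nonneg (α j₀)
  have hT₀ := hN.isNormC00.nonneg (lincomb α unitVec (Finset.Icc (j₀ + 1) b))
  set T := N (lincomb α unitVec (Finset.Icc (j₀ + 1) b))
  set S₁ := ∑ j ∈ Finset.Ico a j₀, ε j * |α j|
  set S₂ := ∑ j ∈ Finset.Icc (j₀ + 1) b, ε j * |α j|
  have hF₀ : 0 ≤ flog l := flog_nonneg l.cast_nonneg
  set F := flog l
  calc ∑ i, normR N r (proj (E i) (lincomb α y (Finset.Icc a b)))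
      ≤ F * S₁ + B + F * |α j₀| + β * ((F + 2) * T + F * S₂) :=
        (hN.sum_normR_proj_lincomb_Icc_le hr hj₀ E).trans (by linarith)
    _ ≤ β * (F * S₁ + B + F * |α j₀|) + β * ((F + 2) * T + F * S₂) :=
        add_le_add_left (le_mul_of_one_le_left (by positivity) hβ) _
    _ = β * (F * (|α j₀| + T + S₁ + S₂) + B + 2 * T) := by ring
    _ ≤ β * (F * B + B + 2 * B) := by gcongr <;> linarith
    _ = (F + 3) * (β * B) := by ring

theorem refinedSup_lincomb_le (h : IsRapidBlockSeq N ε y k) (hN : IsSchlumprechtNorm N)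
    (hr : 7 ≤ r) (hβ : 1 ≤ β) (ha : 1 ≤ a) (hab : a ≤ b)
    (hB : ∀ i₀ ∈ Finset.Icc a b, tailBound N ε α a b i₀ ≤ B)
    (hsplit : ∀ p q, Finset.Icc p q ⊆ Finset.Icc (a + 1) b →
      HasSplitBound N (r ^ flog r) β ε α y (Finset.Icc p q)) :
    refinedSup N r (lincomb α y (Finset.Icc a b)) ≤ flog (9 * r) / flog r * (β * B) := by
  have hB₀ : 0 ≤ B := (abs_nonneg _).trans <|
    (h.abs_le_tailBound hN.isNormC00 ha a).trans (hB a (Finset.left_mem_Icc.2 hab))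
  have hratio : 0 ≤ flog (9 * r) / flog r :=
    div_nonneg (flog_nonneg (by linarith)) (flog_nonneg (by linarith))
  refine IsAverageBound.averageSup_le (fun l hl E hE => ?_) (by positivity)
  have hl₂ : 2 ≤ l := by exact_mod_cast (by linarith : (2 : ℝ) ≤ l)
  have hρ : 2 ≤ r ^ flog r := by linarith [le_rpow_flog (r := r) (by linarith)]
  refine (h.sum_normR_proj_lincomb_le hN hρ hβ ha hab hB hsplit hl₂ hE).trans ?_
  rw [← mul_assoc (flog l)]
  exact mul_le_mul_of_nonneg_right (flog_add_three_le_mul hr hl) (by positivity)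

theorem normR_lincomb_le (h : IsRapidBlockSeq N ε y k) (hN : IsSchlumprechtNorm N)
    (hr : betaThreshold ≤ r) (ha : 1 ≤ a) (hab : a ≤ b)
    (hB : ∀ i₀ ∈ Finset.Icc a b, tailBound N ε α a b i₀ ≤ B) :
    normR N r (lincomb α y (Finset.Icc a b)) ≤ beta r * B := by
  induction hn : b - a using Nat.strong_induction_on generalizing r a b B with
  | _ n ih =>
  have hα : ∀ j ∈ Finset.Icc a b, |α j| ≤ B := fun j hj =>
    (h.abs_le_tailBound hN.isNormC00 ha j).trans (hB j hj)
  have hB₀ : 0 ≤ B := (abs_nonneg _).trans (hα a (Finset.left_mem_Icc.2 hab))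
  have one_le {j : ℕ} (hj : j ∈ Finset.Icc a b) : 1 ≤ j := ha.trans (Finset.mem_Icc.1 hj).1
  have hr₁₆ := lt_of_betaThreshold_le hr
  have hflog := flog_of_betaThreshold_le hr
  have hnext := betaThreshold_le_rpow_flog hr
  by_cases hx : normR N r (lincomb α y (Finset.Icc a b)) = supNorm (lincomb α y (Finset.Icc a b))
  · rw [hx]
    refine (supNorm_lincomb_le (fun i hi j _ hij => h.support_flt hN.isNormC00 (one_le hi) hij)
      (fun j hj => ?_) hB₀ hα).trans (le_mul_of_one_le_left hB₀ (one_le_beta hr))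
    exact (hN.supNorm_le _).trans_eq (h.norm_eq_one j (one_le hj))
  have hsplit (p q : ℕ) (hpq : Finset.Icc p q ⊆ Finset.Icc (a + 1) b) :
      HasSplitBound N (r ^ flog r) (beta (r ^ flog r)) ε α y (Finset.Icc p q) := by
    refine hasSplitBound_Icc hN (by linarith [lt_of_betaThreshold_le hnext]) fun hle C hC => ?_
    obtain ⟨hap, hqb⟩ := (Finset.Icc_subset_Icc_iff hle).1 hpq
    exact ih (q - p) (by omega) hnext (by omega) hle hC rfl
  have hG : 9 < √(flog r) := Real.lt_sqrt_of_sq_lt (by linarith)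
  have hinv : 0 ≤ (1 - 9 / √(flog r))⁻¹ :=
    inv_nonneg.2 (sub_nonneg.2 ((div_le_one (by linarith)).2 hG.le))
  calc normR N r (lincomb α y (Finset.Icc a b))
      ≤ (1 - 9 / √(flog r))⁻¹ * refinedSup N r (lincomb α y (Finset.Icc a b)) :=
        hN.normR_le_refinedSup (by linarith) (by linarith) hx
    _ ≤ (1 - 9 / √(flog r))⁻¹ * (flog (9 * r) / flog r * (beta (r ^ flog r) * B)) :=
        mul_le_mul_of_nonneg_left (h.refinedSup_lincomb_le hN (by linarith) (one_le_beta hnext)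
          ha hab hB hsplit) hinv
    _ = beta r * B := by
        rw [beta_eq_mul hr, betaFactor]
        ring

end IsRapidBlockSeq

end MainEstimate

theorem character_lemma_and_inductive_estimate_general (N : c00 → ℝ) (hN : IsSchlumprechtNorm N) :
    (∀ r : ℝ, 2 ≤ r → 9 ^ 2 < flog r → ∀ x : c00, normR N r x ≠ supNorm x →
      normR N r x ≤ (1 - 9 / √(flog r))⁻¹ * refinedSup N r x) ∧
    ∀ r : ℝ, betaThreshold ≤ r →
      Multipliable (fun i => betaFactor (rseq r i)) ∧
      ∀ (ε : ℕ → ℝ) (y : ℕ → c00) (k : ℕ → ℕ), IsRapidBlockSeq N ε y k →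
        ∀ (a b : ℕ) (_ : 1 ≤ a) (hab : a ≤ b) (α : ℕ → ℝ),
          normR N r (lincomb α y (Finset.Icc a b)) ≤
            beta r * (Finset.Icc a b).sup' (Finset.nonempty_Icc.2 hab) (tailBound N ε α a b) :=
  ⟨fun _ hr hflog _ hx => hN.normR_le_refinedSup hr hflog hx, fun _ hr =>
    ⟨multipliable_betaFactor hr, fun _ _ _ h _ _ ha hab _ =>
      h.normR_lincomb_le hN hr ha hab fun _ hi₀ => Finset.le_sup' _ hi₀⟩⟩

/-- combination of Lemma 2.6 and the key inductive estimate (2.7)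
in the proof of Theorem 2.4. -/
theorem character_lemma_and_inductive_estimate
    (N : c00 → ℝ) (hN : IsSchlumprechtNorm N) :
    ∃ d R : ℝ, 1 < d ∧ 1 < R ∧
      (∀ r : ℝ, 2 ≤ r → d ^ 2 < flog r →
        ∀ x : c00, normR N r x ≠ supNorm x →
          normR N r x ≤ (1 - d / Real.sqrt (flog r))⁻¹ *
            sSup {s | ∃ l : ℕ, r ≤ (l : ℝ) ∧ ∃ E : Fin l → Finset ℕ,
              (∀ i j : Fin l, i < j → FLt (E i) (E j)) ∧
              s = (flog l)⁻¹ * ∑ i, normR N (r ^ flog r) (proj (E i) x)}) ∧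
      ∀ r : ℝ, R ≤ r →
        Multipliable (fun k' : ℕ =>
          (1 - d / Real.sqrt (flog (rseq r k')))⁻¹ *
            (flog (9 * rseq r k') / flog (rseq r k'))) ∧
        ∀ (ε : ℕ → ℝ) (y : ℕ → c00) (k : ℕ → ℕ),
          (∀ n, 1 ≤ n → 0 < ε n) →
          (Summable fun n => ε (n + 1)) →
          (∀ n, 1 ≤ n → N (y n) = 1) →
          (∀ n, 1 ≤ n → ∀ i ∈ (y n).support, ∀ j ∈ (y (n + 1)).support, i < j) →
          StrictMono k →
          (∀ n, 1 ≤ n → ∀ m : ℕ, 1 ≤ m → m ≤ k (n - 1) →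
            ∀ E : Fin m → Finset ℕ, (∀ i j : Fin m, i < j → FLt (E i) (E j)) →
              ∑ i, N (proj (E i) (y n)) ≤ 1 + ε n) →
          (∀ n, 1 ≤ n → ∀ i ∈ (y n).support, (i : ℝ) ≤ ε n * flog ((k n : ℝ) / 3)) →
          ∀ (m : ℕ) (hm : 1 ≤ m) (α : ℕ → ℝ),
            normR N r (∑ i ∈ Finset.Icc 1 m, α i • y i) ≤
              (∏' k' : ℕ, (1 - d / Real.sqrt (flog (rseq r k')))⁻¹ *
                  (flog (9 * rseq r k') / flog (rseq r k'))) *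
                (Finset.Icc 1 m).sup' (Finset.nonempty_Icc.mpr hm)
                  (fun i₀ => |α i₀| +
                    N (∑ i ∈ Finset.Icc (i₀ + 1) m, α i • Finsupp.single i (1 : ℝ)) +
                    ∑ i ∈ Finset.Icc 1 m, ε i * |α i|) := by
  obtain ⟨hchar, hbeta⟩ := character_lemma_and_inductive_estimate_general N hN
  refine ⟨9, betaThreshold, by norm_num, one_lt_pow₀ one_lt_two (by norm_num), hchar,
    fun r hr => ?_⟩
  obtain ⟨hmult, hblock⟩ := hbeta r hr
  refine ⟨hmult, fun ε y k hε _ hnorm hsupp hk hsum hmem m hm α => ?_⟩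
  exact hblock ε y k ⟨fun n hn => (hε n hn).le, hnorm, hsupp, hk.monotone, hsum, hmem⟩
    1 m le_rfl hm α
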